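/- arXiv:math/0411414 — 11 statements merged into one kernel-verified Lean document; each statement's English description precedes it below -/
import Mathlib

section
/- Let K be an algebraically closed field of characteristic zero and let f ∈ K[x] be a monic polynomial of degree d ≥ 1 with roots λ_1, …, λ_d (with multiplicity) that is generic, meaning no λ_i is a root of unity and the 2^d products λ_S = ∏_{i∈S} λ_i, taken over all subsets S ⊆ {1,…,d}, are pairwise distinct. If g ∈ K[x] is another generic monic polynomial of degree d whose cyclic resultants satisfy r_m(g) = r_m(f) for all 1 ≤ m ≤ 2^{d+1}, then g = f. -/
open Polynomial

/-!
Expanding `∏ i, (1 - λ_i ^ n)` gives a combination of the `n`-th powers of the subset products of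
the `λ_i`: it is the image of the product of binomials `∏ i, (1 - [λ_i])` of the group algebra
`K[Kˣ]` under `[v] ↦ v ^ n`. A Vandermonde determinant shows that an element of `K[Kˣ]` is
determined by as many of these images as it has terms, so the cyclic resultants determine the
product of binomials. Since `1 - [a] = -[a] (1 - [a⁻¹])`, one may replace each root by whichever of
`a`, `a⁻¹` is positive for a homomorphism to an ordered group; the lowest terms of the product then
reveal the roots, so the roots are known up to inversion. Inverting a submultiset `w` of them
multiplies the product of binomials by `±[∏ w]`, which is trivial only if `∏ w = 1`, whence `w = 0`.
-/

section Multiset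

variable {α β : Type*}

theorem exists_finset_map_eq_of_le_map {s : Finset α} {f : α → β} {w : Multiset β}
    (h : w ≤ s.val.map f) : ∃ t ⊆ s, w = t.val.map f := by
  obtain ⟨L, hL⟩ := Quot.exists_rep s.val
  obtain ⟨W, rfl⟩ := Quot.exists_rep w
  rw [← hL] at h
  obtain ⟨W', hW, hsub⟩ := h
  obtain ⟨T, hT, rfl⟩ := List.sublist_map_iff.1 hsub
  have hle : (T : Multiset α) ≤ s.val := hL ▸ hT.subperm
  exact ⟨⟨T, Multiset.nodup_of_le hle s.nodup⟩, Finset.val_le_iff.1 hle, Quot.sound hW.symm⟩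

theorem exists_add_map_inv_of_rel [Inv α] {s t : Multiset α}
    (h : s.Rel (fun a b => b = a ∨ b = a⁻¹) t) :
    ∃ u w, s = u + w ∧ t = u + w.map (·⁻¹) := by
  induction h with
  | zero => exact ⟨0, 0, rfl, rfl⟩
  | @cons a b _ _ hab _ ih =>
    obtain ⟨u, w, rfl, rfl⟩ := ih
    rcases hab with hab | hab
    · exact ⟨a ::ₘ u, w, by simp, by simp [hab]⟩
    · exact ⟨u, a ::ₘ w, by simp, by simp [hab]⟩

theorem exists_eq_map_units_val_add_replicate_zero {K : Type*} [GroupWithZero K]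
    (s : Multiset K) :
    ∃ (u : Multiset Kˣ) (k : ℕ), s = u.map Units.val + Multiset.replicate k 0 := by
  induction s using Multiset.induction with
  | empty => exact ⟨0, 0, rfl⟩
  | cons a s ih =>
    obtain ⟨u, k, rfl⟩ := ih
    rcases eq_or_ne a 0 with rfl | ha
    · exact ⟨u, k + 1, by simp⟩
    · exact ⟨Units.mk0 a ha ::ₘ u, k, by simp⟩

end Multiset

section NonTorsion

theorem exists_hom_multiplicative_rat_ne_one {G : Type*} [CommGroup G] {s : Set G}
    (hs : s.Finite) (hfin : ∀ a ∈ s, ¬ IsOfFinOrder a) :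
    ∃ φ : G →* Multiplicative ℚ, ∀ a ∈ s, φ a ≠ 1 := by
  have : Finite s := hs
  let ι : Additive G →ₗ[ℤ] TensorProduct ℤ ℚ (Additive G) := TensorProduct.mk ℤ ℚ (Additive G) 1
  have : IsLocalizedModule (nonZeroDivisors ℤ) ι :=
    IsLocalization.tensorProduct_isLocalizedModule (nonZeroDivisors ℤ) ℚ
  have hne : ∀ a : s, ι (Additive.ofMul a.1) ≠ 0 := by
    intro a h0
    obtain ⟨c, hc⟩ := (IsLocalizedModule.eq_zero_iff (nonZeroDivisors ℤ) ι).1 h0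
    exact hfin a a.2 (isOfFinOrder_iff_zpow_eq_one.2 ⟨c, nonZeroDivisors.ne_zero c.2, hc⟩)
  obtain ⟨f, hf⟩ := Module.exists_dual_forall_apply_ne_zero (K := ℚ) _ hne
  exact ⟨AddMonoidHom.toMultiplicative (f.toAddMonoidHom.comp ι.toAddMonoidHom),
    fun a ha h => hf ⟨a, ha⟩ h⟩

end NonTorsion

section GroupAlgebra

open MonoidAlgebra Multiset

open scoped nonZeroDivisors

variable {R G : Type*} [CommRing R] [CommGroup G]

theorem not_isOfFinOrder_of_one_sub_of_mem_nonZeroDivisors [Nontrivial R] {a : G}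
    (ha : 1 - of R G a ∈ R[G]⁰) : ¬ IsOfFinOrder a := by
  intro hfin
  have hgeom : (∑ i ∈ Finset.range (orderOf a), of R G a ^ i) * (1 - of R G a) = 0 := by
    rw [geom_sum_mul_neg, ← map_pow, pow_orderOf_eq_one, map_one, sub_self]
  have hzero := (mem_nonZeroDivisors_iff.1 ha).2 _ hgeom
  have hcoeff : (∑ i ∈ Finset.range (orderOf a), of R G a ^ i).coeff 1 = 1 := by
    have hpow : ∀ i, of R G a ^ i = single (a ^ i) 1 := fun i => by rw [← map_pow, of_apply]
    simp_rw [hpow, MonoidAlgebra.coeff_sum, coeff_single, Finsupp.finsetSum_apply]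
    rw [Finset.sum_eq_single_of_mem 0 (Finset.mem_range.2 hfin.orderOf_pos), pow_zero,
      Finsupp.single_eq_same]
    exact fun i hi h0 => Finsupp.single_eq_of_ne'
      (pow_ne_one_of_lt_orderOf h0 (Finset.mem_range.1 hi))
  rw [hzero] at hcoeff
  exact zero_ne_one hcoeff

theorem one_sub_of_mem_nonZeroDivisors {a : G} (ha : ¬ IsOfFinOrder a) :
    1 - of R G a ∈ R[G]⁰ := by
  rw [mem_nonZeroDivisors_iff_right]
  intro F hF
  have hinv : ∀ x, F.coeff (a * x) = F.coeff x := by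
    intro x
    have hcoeff : F.coeff (a * x) - F.coeff x = 0 := by
      simpa [mul_sub, mul_comm x] using congrArg (fun H : R[G] => H.coeff (a * x)) hF
    exact sub_eq_zero.1 hcoeff
  by_contra hne
  obtain ⟨x, hx⟩ := Finsupp.ne_iff.1 (mt coeff_eq_zero.1 hne)
  have hpow : ∀ n : ℕ, F.coeff (a ^ n * x) = F.coeff x := by
    intro n
    induction n with
    | zero => simp
    | succ n ih => rw [pow_succ', mul_assoc, hinv, ih]
  have hinj : Function.Injective fun n : ℕ => a ^ n * x :=
    (mul_left_injective x).comp (injective_pow_iff_not_isOfFinOrder.2 ha)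
  exact Set.infinite_of_injective_forall_mem hinj
    (fun n => Finsupp.mem_support_iff.2 ((hpow n).trans_ne hx)) F.coeff.support.finite_toSet

theorem one_sub_of_mem_nonZeroDivisors_iff [Nontrivial R] {a : G} :
    1 - of R G a ∈ R[G]⁰ ↔ ¬ IsOfFinOrder a :=
  ⟨not_isOfFinOrder_of_one_sub_of_mem_nonZeroDivisors, one_sub_of_mem_nonZeroDivisors⟩

variable (R) in
/-- The product of the binomials `1 - [a]`, for `a` in the multiset `s`, in the group algebra. Its
specializations `[v] ↦ v ^ n` are, up to sign, the cyclic resultants of the polynomial with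
roots `s`. -/
noncomputable def binomialProd (s : Multiset G) : R[G] :=
  (s.map fun a => 1 - of R G a).prod

@[simp]
theorem binomialProd_zero : binomialProd R (0 : Multiset G) = 1 := rfl

@[simp]
theorem binomialProd_cons (a : G) (s : Multiset G) :
    binomialProd R (a ::ₘ s) = (1 - of R G a) * binomialProd R s := by
  simp [binomialProd]

theorem binomialProd_add (s t : Multiset G) :
    binomialProd R (s + t) = binomialProd R s * binomialProd R t := by
  simp [binomialProd]

theorem coeff_binomialProd_cons (a : G) (s : Multiset G) (x : G) :
    (binomialProd R (a ::ₘ s)).coeff x =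
      (binomialProd R s).coeff x - (binomialProd R s).coeff (a⁻¹ * x) := by
  simp [sub_mul]

theorem binomialProd_mem_nonZeroDivisors_iff [Nontrivial R] {s : Multiset G} :
    binomialProd R s ∈ R[G]⁰ ↔ ∀ a ∈ s, ¬ IsOfFinOrder a := by
  induction s using Multiset.induction with
  | empty => simp
  | cons a s ih =>
    simp only [binomialProd_cons, mul_mem_nonZeroDivisors, one_sub_of_mem_nonZeroDivisors_iff, ih,
      forall_mem_cons]

theorem card_support_binomialProd_le (s : Multiset G) :
    (binomialProd R s).coeff.support.card ≤ 2 ^ card s := by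
  classical
  induction s using Multiset.induction with
  | empty =>
    rw [binomialProd_zero, one_def, coeff_single, card_zero, pow_zero]
    exact Finsupp.card_support_le_one'.2 ⟨1, 1, rfl⟩
  | cons a s ih =>
    have hsub : (binomialProd R (a ::ₘ s)).coeff.support ⊆
        (binomialProd R s).coeff.support ∪ (binomialProd R s).coeff.support.image (a * ·) := by
      intro x hx
      rw [Finsupp.mem_support_iff, coeff_binomialProd_cons] at hx
      simp only [Finset.mem_union, Finset.mem_image, Finsupp.mem_support_iff]
      by_cases h0 : (binomialProd R s).coeff x = 0
      · exact .inr ⟨a⁻¹ * x, fun h1 => hx (by rw [h0, h1, sub_zero]), mul_inv_cancel_left a x⟩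
      · exact .inl h0
    calc
      _ ≤ _ := Finset.card_le_card hsub
      _ ≤ 2 ^ card s + 2 ^ card s :=
        (Finset.card_union_le _ _).trans (add_le_add ih (Finset.card_image_le.trans ih))
      _ = 2 ^ card (a ::ₘ s) := by rw [card_cons, pow_succ, mul_two]

theorem binomialProd_eq_single_mul_map_inv (s : Multiset G) :
    binomialProd R s = single s.prod ((-1) ^ card s) * binomialProd R (s.map (·⁻¹)) := by
  induction s using Multiset.induction with
  | empty => simp [one_def]
  | cons a s ih =>
    have hflip : 1 - of R G a = single a (-1) * (1 - of R G a⁻¹) := by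
      rw [of_apply, of_apply, one_def, mul_sub, single_mul_single, single_mul_single,
        mul_inv_cancel, mul_one, mul_one, single_neg, single_neg]
      abel
    rw [binomialProd_cons, ih, hflip, map_cons, binomialProd_cons, prod_cons, card_cons, pow_succ',
      ← single_mul_single]
    ring

theorem binomialProd_add_eq_single_mul (u w : Multiset G) :
    binomialProd R (u + w) =
      single w.prod ((-1) ^ card w) * binomialProd R (u + w.map (·⁻¹)) := by
  rw [binomialProd_add, binomialProd_add, binomialProd_eq_single_mul_map_inv w]
  ring

section PositiveRep

variable {Γ : Type*} [CommGroup Γ] [LinearOrder Γ] {φ : G →* Γ}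

variable (φ) in
/-- Whichever of `a` and `a⁻¹` has image at least `1` under `φ`: the normal form of `a` up to
inversion, provided `φ a ≠ 1`. -/
def positiveRep (a : G) : G :=
  if 1 ≤ φ a then a else a⁻¹

theorem positiveRep_eq_or_eq_inv (a : G) : positiveRep φ a = a ∨ positiveRep φ a = a⁻¹ := by
  unfold positiveRep
  split_ifs <;> simp

theorem eq_or_eq_inv_of_positiveRep_eq {a b : G} (h : positiveRep φ a = positiveRep φ b) :
    b = a ∨ b = a⁻¹ := by
  rcases positiveRep_eq_or_eq_inv (φ := φ) a with ha | ha <;>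
    rcases positiveRep_eq_or_eq_inv (φ := φ) b with hb | hb <;>
    rw [ha, hb] at h
  · exact .inl h.symm
  · exact .inr (inv_eq_iff_eq_inv.1 h.symm)
  · exact .inr h.symm
  · exact .inl (inv_injective h).symm

theorem one_lt_map_positiveRep [IsOrderedMonoid Γ] {a : G} (ha : φ a ≠ 1) :
    1 < φ (positiveRep φ a) := by
  unfold positiveRep
  split_ifs with h
  · exact h.lt_of_ne' ha
  · rw [map_inv]
    exact one_lt_inv'.2 (not_le.1 h)

variable (R φ) in
theorem exists_binomialProd_eq_single_mul_map_positiveRep (s : Multiset G) :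
    ∃ (g : G) (ε : Rˣ),
      binomialProd R s = single g (ε : R) * binomialProd R (s.map (positiveRep φ)) := by
  have hrel : s.Rel (fun a b => b = a ∨ b = a⁻¹) (s.map (positiveRep φ)) :=
    rel_map_right.2 (rel_refl_of_refl_on fun a _ => positiveRep_eq_or_eq_inv a)
  obtain ⟨u, w, hs, hrep⟩ := exists_add_map_inv_of_rel hrel
  exact ⟨w.prod, (-1) ^ card w, by rw [hrep, hs, binomialProd_add_eq_single_mul]; simp⟩

end PositiveRep

section Ordered

variable {Γ : Type*} [CommGroup Γ] [LinearOrder Γ] [IsOrderedMonoid Γ] {φ : G →* Γ}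
  {s t : Multiset G}

theorem coeff_binomialProd_of_map_le_one [DecidableEq G] (hs : ∀ a ∈ s, 1 < φ a) {x : G}
    (hx : φ x ≤ 1) : (binomialProd R s).coeff x = if x = 1 then 1 else 0 := by
  induction s using Multiset.induction generalizing x with
  | empty => simp [one_def, Finsupp.single_apply, eq_comm]
  | cons a s ih =>
    rw [forall_mem_cons] at hs
    have hlt : φ (a⁻¹ * x) < 1 := by
      rw [map_mul, map_inv]
      exact mul_lt_one_of_lt_of_le (inv_lt_one'.2 hs.1) hx
    have hne : a⁻¹ * x ≠ 1 := fun h => hlt.ne (by rw [h, map_one])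
    rw [coeff_binomialProd_cons, ih hs.2 hx, ih hs.2 hlt.le, if_neg hne, sub_zero]

theorem coeff_binomialProd_of_forall_map_le [DecidableEq G] {v : G} (hv : 1 < φ v)
    (hs : ∀ a ∈ s, φ v ≤ φ a) : (binomialProd R s).coeff v = -(s.count v : R) := by
  induction s using Multiset.induction with
  | empty =>
    have hne : v ≠ 1 := fun h => hv.ne' (by rw [h, map_one])
    simp [one_def, hne]
  | cons a s ih =>
    rw [forall_mem_cons] at hs
    have hle : φ (a⁻¹ * v) ≤ 1 := by
      rw [map_mul, map_inv]
      exact inv_mul_le_one_iff.2 hs.1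
    rw [coeff_binomialProd_cons, ih hs.2, coeff_binomialProd_of_map_le_one
      (fun b hb => hv.trans_le (hs.2 b hb)) hle, count_cons]
    simp only [inv_mul_eq_one, eq_comm (a := a)]
    split_ifs <;> push_cast <;> ring

theorem eq_of_binomialProd_eq_of_one_lt [CharZero R] (hs : ∀ a ∈ s, 1 < φ a)
    (ht : ∀ a ∈ t, 1 < φ a) (h : binomialProd R s = binomialProd R t) : s = t := by
  classical
  have hfin : ∀ a ∈ s, ¬ IsOfFinOrder a := fun a ha hfin =>
    not_isOfFinOrder_of_isMulTorsionFree (hs a ha).ne' (φ.isOfFinOrder hfin)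
  have hreg : binomialProd R (s ∩ t) ∈ R[G]⁰ :=
    binomialProd_mem_nonZeroDivisors_iff.2 fun a ha => hfin a (mem_inter.1 ha).1
  have hcancel : binomialProd R (s - t) = binomialProd R (t - s) := by
    refine (mul_cancel_right_mem_nonZeroDivisors hreg).1 ?_
    rw [← binomialProd_add, sub_add_inter, h, ← binomialProd_add, inter_comm, sub_add_inter]
  by_contra hne
  have hdiff : ((s - t) + (t - s)).toFinset.Nonempty := by
    rw [toFinset_nonempty, Ne, add_eq_zero, tsub_eq_zero_iff_le, tsub_eq_zero_iff_le]
    exact fun hle => hne (hle.1.antisymm hle.2)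
  obtain ⟨v, hv, hmin⟩ := Finset.exists_min_image _ φ hdiff
  simp only [mem_toFinset, mem_add] at hv hmin
  have hv1 : 1 < φ v := hv.elim (fun hv => hs v (mem_of_le tsub_le_self hv))
    (fun hv => ht v (mem_of_le tsub_le_self hv))
  have hcount : count v (s - t) = count v (t - s) := by
    have hv_coeff := congrArg (fun F : R[G] => F.coeff v) hcancel
    simpa only [coeff_binomialProd_of_forall_map_le hv1 (fun a ha => hmin a (.inl ha)),
      coeff_binomialProd_of_forall_map_le hv1 (fun a ha => hmin a (.inr ha)), neg_inj,
      Nat.cast_inj] using hv_coeff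
  rw [← count_pos, ← count_pos, count_sub, count_sub] at hv
  rw [count_sub, count_sub] at hcount
  omega

theorem eq_one_of_binomialProd_eq_single_mul (hs : ∀ a ∈ s, 1 < φ a) (ht : ∀ a ∈ t, 1 < φ a)
    {g : G} {ε : R} (hε : ε ≠ 0) (h : binomialProd R s = single g ε * binomialProd R t) :
    g = 1 ∧ ε = 1 := by
  classical
  have hcoeff : ∀ x, (binomialProd R s).coeff x = ε * (binomialProd R t).coeff (g⁻¹ * x) :=
    fun x => by rw [h, coeff_single_mul_apply]
  rcases le_total (φ g) 1 with hg | hg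
  · have hg_coeff := hcoeff g
    rw [inv_mul_cancel, coeff_binomialProd_of_map_le_one hs hg,
      coeff_binomialProd_of_map_le_one ht (map_one φ).le, if_pos rfl, mul_one] at hg_coeff
    split_ifs at hg_coeff with hg1
    · exact ⟨hg1, hg_coeff.symm⟩
    · exact absurd hg_coeff.symm hε
  · have h1_coeff := hcoeff 1
    rw [mul_one, coeff_binomialProd_of_map_le_one hs (map_one φ).le,
      coeff_binomialProd_of_map_le_one ht (by rw [map_inv]; exact inv_le_one'.2 hg),
      if_pos rfl] at h1_coeff
    split_ifs at h1_coeff with hg1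
    · exact ⟨inv_eq_one.1 hg1, by rw [h1_coeff, mul_one]⟩
    · rw [mul_zero] at h1_coeff
      exact absurd (eq_zero_of_zero_eq_one h1_coeff.symm ε) hε

theorem map_positiveRep_eq_of_binomialProd_eq [CharZero R] (hs : ∀ a ∈ s, φ a ≠ 1)
    (ht : ∀ a ∈ t, φ a ≠ 1) (h : binomialProd R s = binomialProd R t) :
    s.map (positiveRep φ) = t.map (positiveRep φ) := by
  have hs' : ∀ a ∈ s.map (positiveRep φ), 1 < φ a :=
    forall_mem_map_iff.2 fun a ha => one_lt_map_positiveRep (hs a ha)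
  have ht' : ∀ a ∈ t.map (positiveRep φ), 1 < φ a :=
    forall_mem_map_iff.2 fun a ha => one_lt_map_positiveRep (ht a ha)
  obtain ⟨g, ε, hg⟩ := exists_binomialProd_eq_single_mul_map_positiveRep R φ s
  obtain ⟨k, δ, hk⟩ := exists_binomialProd_eq_single_mul_map_positiveRep R φ t
  have hunit : binomialProd R (s.map (positiveRep φ)) =
      single (g⁻¹ * k) ((ε⁻¹ * δ : Rˣ) : R) * binomialProd R (t.map (positiveRep φ)) := by
    rw [Units.val_mul, ← single_mul_single, mul_assoc, ← hk, ← h, hg, ← mul_assoc,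
      single_mul_single, inv_mul_cancel, Units.inv_mul, ← one_def, one_mul]
  obtain ⟨h1, h2⟩ := eq_one_of_binomialProd_eq_single_mul hs' ht' (Units.ne_zero _) hunit
  rw [h1, h2, ← one_def, one_mul] at hunit
  exact eq_of_binomialProd_eq_of_one_lt hs' ht' hunit

end Ordered

theorem eq_of_binomialProd_eq [CharZero R] {s t : Multiset G}
    (hs : ∀ a ∈ s, ¬ IsOfFinOrder a) (hprod : ∀ w ≤ s, w.prod = 1 → w = 0)
    (h : binomialProd R s = binomialProd R t) : s = t := by
  classical
  have hreg := (binomialProd_mem_nonZeroDivisors_iff (R := R)).2 hs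
  have ht : ∀ a ∈ t, ¬ IsOfFinOrder a :=
    binomialProd_mem_nonZeroDivisors_iff.1 (h ▸ hreg)
  obtain ⟨φ, hφ⟩ := exists_hom_multiplicative_rat_ne_one (s + t).finite_toSet
    fun a ha => (mem_add.1 ha).elim (hs a) (ht a)
  have hrep : s.map (positiveRep φ) = t.map (positiveRep φ) :=
    map_positiveRep_eq_of_binomialProd_eq (fun a ha => hφ a (mem_add.2 (.inl ha)))
      (fun a ha => hφ a (mem_add.2 (.inr ha))) h
  have hrel : s.Rel (fun a b => b = a ∨ b = a⁻¹) t :=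
    (rel_map.1 (rel_eq.2 hrep)).mono fun a _ b _ hab => eq_or_eq_inv_of_positiveRep_eq hab
  obtain ⟨u, w, rfl, rfl⟩ := exists_add_map_inv_of_rel hrel
  have hsingle : single w.prod ((-1) ^ card w) = (1 : R[G]) := by
    refine (mul_cancel_right_mem_nonZeroDivisors hreg).1 ?_
    rw [one_mul]
    conv_rhs => rw [binomialProd_add_eq_single_mul, ← h]
  have hw : w.prod = 1 := by
    by_contra hne
    have h1_coeff := congrArg (fun F : R[G] => F.coeff 1) hsingle
    simp [one_def, Finsupp.single_eq_of_ne' hne] at h1_coeff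
  rw [hprod w (le_add_left _ _) hw, map_zero]

end GroupAlgebra

section PowerSums

open MonoidAlgebra Multiset

variable {R : Type*} [CommRing R]

variable (R) in
/-- The homomorphism `[v] ↦ v ^ n` from the group algebra of the units, under which an element
`∑ c_v [v]` becomes the generalized power sum `∑ c_v v ^ n`. -/
noncomputable def evalPow (n : ℕ) : R[Rˣ] →ₐ[R] R :=
  lift R R Rˣ ((Units.coeHom R).comp (powMonoidHom n))

theorem evalPow_apply (n : ℕ) (F : R[Rˣ]) :
    evalPow R n F = ∑ v ∈ F.coeff.support, F.coeff v * (v : R) ^ n := by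
  simp [evalPow, lift_apply, Finsupp.sum]

theorem evalPow_binomialProd (n : ℕ) (s : Multiset Rˣ) :
    evalPow R n (binomialProd R s) = (s.map fun a => 1 - (a : R) ^ n).prod := by
  simp [evalPow, binomialProd, map_multiset_prod]

theorem eq_zero_of_evalPow_eq_zero [IsDomain R] {F : R[Rˣ]}
    (h : ∀ n, 1 ≤ n → n ≤ F.coeff.support.card → evalPow R n F = 0) : F = 0 := by
  let e := F.coeff.support.equivFin
  have hinj : Function.Injective fun i => ((e.symm i : Rˣ) : R) :=
    Units.val_injective.comp (Subtype.val_injective.comp e.symm.injective)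
  have hvand : (fun i => F.coeff (e.symm i) * ((e.symm i : Rˣ) : R)) = 0 := by
    refine Matrix.eq_zero_of_forall_pow_sum_mul_pow_eq_zero hinj fun i => ?_
    rw [← h (i + 1) (Nat.le_add_left 1 i) i.2, evalPow_apply, ← F.coeff.support.sum_coe_sort,
      ← e.symm.sum_comp]
    exact Finset.sum_congr rfl fun j _ => by rw [pow_succ']; ring
  ext v
  by_contra hv
  exact hv (by simpa using congrFun hvand (e ⟨v, Finsupp.mem_support_iff.2 hv⟩))

theorem eq_of_prod_one_sub_pow_eq [IsDomain R] [CharZero R] {s t : Multiset Rˣ}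
    (hs : ∀ a ∈ s, ¬ IsOfFinOrder a) (hprod : ∀ w ≤ s, w.prod = 1 → w = 0)
    (h : ∀ n, 1 ≤ n → n ≤ 2 ^ card s + 2 ^ card t →
      (s.map fun a => 1 - (a : R) ^ n).prod = (t.map fun a => 1 - (a : R) ^ n).prod) :
    s = t := by
  classical
  refine eq_of_binomialProd_eq (R := R) hs hprod (sub_eq_zero.1 (eq_zero_of_evalPow_eq_zero ?_))
  intro n hn hcard
  have hle : n ≤ 2 ^ card s + 2 ^ card t :=
    hcard.trans <| (Finset.card_le_card Finsupp.support_sub).trans <|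
      (Finset.card_union_le _ _).trans <|
        add_le_add (card_support_binomialProd_le s) (card_support_binomialProd_le t)
  rw [map_sub, evalPow_binomialProd, evalPow_binomialProd, h n hn hle, sub_self]

end PowerSums

section CyclicResultants

theorem eq_of_forall_prod_pow_sub_one_eq {K : Type*} [Field K] [CharZero K] {s t : Multiset K}
    (hcard : s.card = t.card) (hroot : ∀ a ∈ s, ∀ n : ℕ, 0 < n → a ^ n ≠ 1)
    (hprod : ∀ w ≤ s, w.prod = 1 → w = 0)
    (hres : ∀ n : ℕ, 1 ≤ n → n ≤ 2 ^ (s.card + 1) →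
      (s.map fun a => a ^ n - 1).prod = (t.map fun a => a ^ n - 1).prod) :
    s = t := by
  have hres' : ∀ n : ℕ, 1 ≤ n → n ≤ 2 ^ (s.card + 1) →
      (s.map fun a => 1 - a ^ n).prod = (t.map fun a => 1 - a ^ n).prod := by
    intro n hn hle
    have hneg : ∀ r : Multiset K, (r.map fun a => 1 - a ^ n).prod =
        (-1) ^ r.card * (r.map fun a => a ^ n - 1).prod := fun r => by
      rw [← Multiset.card_map, ← Multiset.prod_map_neg, Multiset.map_map]
      simp only [Function.comp_def, neg_sub]
    rw [hneg, hneg, hcard, hres n hn hle]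
  obtain ⟨u, j, rfl⟩ := exists_eq_map_units_val_add_replicate_zero s
  obtain ⟨v, k, rfl⟩ := exists_eq_map_units_val_add_replicate_zero t
  simp only [Multiset.card_add, Multiset.card_map, Multiset.card_replicate] at hcard hres'
  obtain rfl : u = v := by
    refine eq_of_prod_one_sub_pow_eq ?_ ?_ ?_
    · intro a ha hfin
      obtain ⟨n, hn, han⟩ := isOfFinOrder_iff_pow_eq_one.1 hfin
      refine hroot a (Multiset.mem_add.2 (.inl (Multiset.mem_map_of_mem _ ha))) n hn ?_
      rw [← Units.val_pow_eq_pow_val, han, Units.val_one]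
    · intro w hw hw1
      refine Multiset.map_eq_zero.1 (hprod (w.map Units.val) ?_ ?_)
      · exact (Multiset.map_le_map hw).trans (Multiset.le_add_right _ _)
      · exact ((Units.coeHom K).map_multiset_prod w).symm.trans (congrArg Units.val hw1)
    · intro n hn hle
      have hpow : 2 ^ u.card + 2 ^ v.card ≤ 2 ^ (u.card + j + 1) := by
        rw [pow_succ, mul_two]
        exact add_le_add (Nat.pow_le_pow_right two_pos (by omega))
          (Nat.pow_le_pow_right two_pos (by omega))
      simpa [Nat.one_le_iff_ne_zero.1 hn] using hres' n hn (hle.trans hpow)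
  rw [Nat.add_left_cancel hcard]

theorem generic_determined_by_first_two_pow_succ_cyclic_resultants_general
    {K ι : Type*} [Field K] [CharZero K] [Fintype ι] (f g : Polynomial K) (l m : ι → K)
    (hf : f = ∏ i, (X - C (l i)))
    (hg : g = ∏ i, (X - C (m i)))
    (hlunit : ∀ i, ∀ n : ℕ, 0 < n → l i ^ n ≠ 1)
    (hlprod : ∀ S : Finset ι, ∏ i ∈ S, l i = 1 → S = ∅)
    (hres : ∀ n : ℕ, 1 ≤ n → n ≤ 2 ^ (Fintype.card ι + 1) →
      ∏ i, (l i ^ n - 1) = ∏ i, (m i ^ n - 1)) :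
    f = g := by
  have hroots : Finset.univ.val.map l = Finset.univ.val.map m := by
    refine eq_of_forall_prod_pow_sub_one_eq ?_ ?_ ?_ ?_
    · simp only [Multiset.card_map]
    · simpa using hlunit
    · intro w hw hw1
      obtain ⟨S, -, rfl⟩ := exists_finset_map_eq_of_le_map hw
      simp [hlprod S hw1]
    · simpa using hres
  have hprodX : ∀ p : ι → K, ∏ i, (X - C (p i)) =
      ((Finset.univ.val.map p).map fun a => X - C a).prod := fun p => by
    rw [Multiset.map_map]; rfl
  rw [hf, hg, hprodX, hprodX, hroots]

end CyclicResultants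

/-- A generic monic polynomial of degree `d ≥ 1` over an algebraically closed field of
characteristic zero is determined by its first `2^(d+1)` cyclic resultants.
Genericity: no root is a root of unity, and the `2^d` subset products of the roots
are pairwise distinct. -/
theorem generic_determined_by_first_two_pow_succ_cyclic_resultants
    {K : Type*} [Field K] [IsAlgClosed K] [CharZero K]
    (d : ℕ) (hd : 1 ≤ d) (f g : Polynomial K) (l m : Fin d → K)
    (hf : f = ∏ i, (X - C (l i)))
    (hg : g = ∏ i, (X - C (m i)))
    (hlunit : ∀ i, ∀ n : ℕ, 0 < n → l i ^ n ≠ 1)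
    (hmunit : ∀ i, ∀ n : ℕ, 0 < n → m i ^ n ≠ 1)
    (hlprod : Function.Injective fun S : Finset (Fin d) => ∏ i ∈ S, l i)
    (hmprod : Function.Injective fun S : Finset (Fin d) => ∏ i ∈ S, m i)
    (hres : ∀ n : ℕ, 1 ≤ n → n ≤ 2 ^ (d + 1) →
      ∏ i, (l i ^ n - 1) = ∏ i, (m i ^ n - 1)) :
    f = g := by
  exact generic_determined_by_first_two_pow_succ_cyclic_resultants_general f g l m hf hg hlunit
    (fun S hS => hlprod (by simpa using hS)) (by simpa using hres)
end

section
/- Let K be an algebraically closed field of characteristic zero and let f ∈ K[x] be a monic reciprocal polynomial of even degree d, with roots coming in reciprocal pairs λ_1^{±1}, …, λ_{d/2}^{±1}, that is generic, meaning no root of f is a root of unity and the 3^{d/2} quotients λ_S/λ_T, taken over all ordered pairs (S,T) of disjoint subsets of {1,…,d/2}, are pairwise distinct. If g is another such generic monic reciprocal polynomial of degree d with r_m(g) = r_m(f) for all 1 ≤ m ≤ 2·3^{d/2}, then g = f. -/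
open Polynomial

/-!
Put `P(x) = ∏ i, (2 - [xᵢ] - [xᵢ⁻¹])` in the monoid ring `ℤ[K]`. The substitution `[u] ↦ uⁿ` sends
`P(l)` to the `n`-th cyclic resultant, and a nonzero element of `ℤ[K]` supported on at most `N`
nonzero points cannot be killed by these substitutions for all `1 ≤ n ≤ N` (Vandermonde). Since
`P(l)` and `P(m)` have at most `3^e` terms each, the hypothesis forces `P(l) = P(m)`.

Expanding, `P(x)` is the sum over sign vectors `s` of `(-1)^b 2^(e-b) [∏ i, xᵢ ^ sᵢ]`, where `b` is
the number of nonzero signs. If `l` is generic, then `P(l)` has `3^e` terms, so `m` is generic too.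
For a generic family the roots of the polynomial are exactly the points of coefficient `-2^(e-1)`,
so the polynomial can be read off `P(x)`.
-/

theorem eq_zero_of_forall_lift_powMonoidHom_eq_zero {R A : Type*} [CommSemiring R] [CommRing A]
    [IsDomain A] [Algebra R A] [FaithfulSMul R A] {p : MonoidAlgebra R A}
    (hp0 : 0 ∉ p.coeff.support)
    (hp : ∀ n, 1 ≤ n → n ≤ p.coeff.support.card →
      MonoidAlgebra.lift R A A (powMonoidHom n) p = 0) : p = 0 := by
  let point : Fin p.coeff.support.card → A := fun j => p.coeff.support.equivFin.symm j
  have point_injective : Function.Injective point :=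
    Subtype.val_injective.comp p.coeff.support.equivFin.symm.injective
  have weight_eq_zero : (fun j => algebraMap R A (p.coeff (point j)) * point j) = 0 := by
    refine Matrix.eq_zero_of_forall_pow_sum_mul_pow_eq_zero point_injective fun i => ?_
    calc ∑ j, algebraMap R A (p.coeff (point j)) * point j * point j ^ (i : ℕ)
        = ∑ u : p.coeff.support, algebraMap R A (p.coeff u) * (u : A) ^ (i + 1 : ℕ) := by
          simp only [mul_assoc, ← pow_succ']
          exact Equiv.sum_comp p.coeff.support.equivFin.symm
            fun u => algebraMap R A (p.coeff u) * (u : A) ^ (i + 1 : ℕ)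
      _ = MonoidAlgebra.lift R A A (powMonoidHom (i + 1)) p := by
          rw [MonoidAlgebra.lift_apply', Finsupp.sum, ← Finset.sum_coe_sort p.coeff.support]
          simp only [powMonoidHom_apply]
      _ = 0 := hp _ (Nat.le_add_left 1 i) i.isLt
  rw [← MonoidAlgebra.coeff_eq_zero, ← Finsupp.support_eq_empty]
  refine Finset.eq_empty_of_forall_notMem fun u hu => ?_
  have hu_weight := congrFun weight_eq_zero (p.coeff.support.equivFin ⟨u, hu⟩)
  simp only [point, Equiv.symm_apply_apply, Pi.zero_apply, mul_eq_zero,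
    FaithfulSMul.algebraMap_eq_zero_iff] at hu_weight
  exact hu_weight.elim (Finsupp.mem_support_iff.mp hu) fun hu0 => hp0 (hu0 ▸ hu)

section SignVectors

variable {ι : Type*} [Fintype ι]

/-- The quotient `x_S / x_T`, where the pair of disjoint sets `S`, `T` is encoded by the sign
vector `s` with `S = {i | s i = 1}` and `T = {i | s i = -1}`. -/
def signedProd {M : Type*} [DivisionCommMonoid M] (x : ι → M) (s : ι → SignType) : M :=
  ∏ i, x i ^ (s i : ℤ)

/-- The coefficient of the term `signedProd x s` in the expansion of `∏ i, (2 - xᵢ - xᵢ⁻¹)`. -/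
def signCoeff (s : ι → SignType) : ℤ :=
  ∏ i, if s i = 0 then 2 else -1

theorem card_fun_signType [DecidableEq ι] :
    Fintype.card (ι → SignType) = 3 ^ Fintype.card ι :=
  Fintype.card_fun

theorem signedProd_eq_prod_div_prod {M : Type*} [DivisionCommMonoid M] (x : ι → M)
    (s : ι → SignType) :
    signedProd x s = (∏ i with s i = 1, x i) / ∏ i with s i = -1, x i := by
  rw [Finset.prod_filter, Finset.prod_filter, ← Finset.prod_div_distrib, signedProd]
  refine Finset.prod_congr rfl fun i _ => ?_
  rcases SignType.trichotomy (s i) with h | h | h <;> simp [h]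

theorem signedProd_injective_of_injOn {M : Type*} [DivisionCommMonoid M] {x : ι → M}
    (hx : Set.InjOn (fun p : Finset ι × Finset ι => (∏ i ∈ p.1, x i) / ∏ i ∈ p.2, x i)
      {p | Disjoint p.1 p.2}) :
    Function.Injective (signedProd x) := by
  intro s t hst
  have disjoint_levels (s : ι → SignType) :
      Disjoint (Finset.univ.filter (s · = 1)) (Finset.univ.filter (s · = -1)) :=
    Finset.disjoint_filter.mpr fun i _ h => by simp [h]
  simp only [signedProd_eq_prod_div_prod] at hst
  obtain ⟨h_pos, h_neg⟩ :=
    Prod.mk.inj (@hx (_, _) (disjoint_levels s) (_, _) (disjoint_levels t) hst)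
  funext i
  have h_pos_i : s i = 1 ↔ t i = 1 := by simpa using Finset.ext_iff.mp h_pos i
  have h_neg_i : s i = -1 ↔ t i = -1 := by simpa using Finset.ext_iff.mp h_neg i
  generalize s i = a at *
  generalize t i = b at *
  decide +revert

theorem signedProd_ne_zero {K : Type*} [CommGroupWithZero K] {x : ι → K} (hx : ∀ i, x i ≠ 0)
    (s : ι → SignType) : signedProd x s ≠ 0 :=
  Finset.prod_ne_zero_iff.mpr fun i _ => zpow_ne_zero _ (hx i)

theorem signCoeff_ne_zero (s : ι → SignType) : signCoeff s ≠ 0 :=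
  Finset.prod_ne_zero_iff.mpr fun i _ => by split_ifs <;> decide

theorem signCoeff_eq_two_pow_mul_neg_one_pow (s : ι → SignType) :
    signCoeff s = 2 ^ (Finset.univ.filter (s · = 0)).card *
      (-1) ^ (Finset.univ.filter (s · ≠ 0)).card := by
  simp [signCoeff, Finset.prod_ite]

theorem two_mul_signCoeff_eq_neg_two_pow_card_iff (s : ι → SignType) :
    2 * signCoeff s = -2 ^ Fintype.card ι ↔ (Finset.univ.filter (s · ≠ 0)).card = 1 := by
  have h_card : (Finset.univ.filter (s · = 0)).card + (Finset.univ.filter (s · ≠ 0)).card =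
      Fintype.card ι := Finset.card_filter_add_card_filter_not _
  rw [signCoeff_eq_two_pow_mul_neg_one_pow, ← h_card]
  generalize (Finset.univ.filter (s · = 0)).card = a
  generalize (Finset.univ.filter (s · ≠ 0)).card = b
  constructor
  · intro h
    have h_abs : 2 ^ (1 + a) = 2 ^ (a + b) := by
      simpa [Int.natAbs_mul, Int.natAbs_pow, pow_add] using congrArg Int.natAbs h
    have := Nat.pow_right_injective le_rfl h_abs
    omega
  · rintro rfl
    ring

theorem card_filter_ne_zero_eq_one_iff [DecidableEq ι] (s : ι → SignType) :
    (Finset.univ.filter (s · ≠ 0)).card = 1 ↔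
      ∃ i, s = Pi.single i 1 ∨ s = Pi.single i (-1) := by
  rw [Finset.card_eq_one]
  refine exists_congr fun i => ?_
  constructor
  · intro h
    have h_ne_zero (k : ι) : s k ≠ 0 ↔ k = i := by simpa using Finset.ext_iff.mp h k
    have h_single : s = Pi.single i (s i) := by
      ext k
      by_cases hk : k = i
      · simp [hk]
      · simpa [hk] using h_ne_zero k
    rcases SignType.trichotomy (s i) with hi | hi | hi
    · exact .inr (hi ▸ h_single)
    · exact absurd hi ((h_ne_zero i).mpr rfl)
    · exact .inl (hi ▸ h_single)
  · rintro (rfl | rfl) <;> ext k <;> simp [Pi.single_apply]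

theorem pi_single_eq_pi_single_iff_of_ne_zero {α β : Type*} [DecidableEq α] [Zero β]
    {i j : α} {a b : β} (ha : a ≠ 0) : (Pi.single i a : α → β) = Pi.single j b ↔ i = j ∧ a = b := by
  constructor
  · intro h
    have h_at : a = (Pi.single j b : α → β) i := by simpa using congrFun h i
    by_cases hij : i = j
    · subst hij
      exact ⟨rfl, by simpa using h_at⟩
    · exact absurd (by simpa [hij] using h_at) ha
  · rintro ⟨rfl, rfl⟩
    rfl

theorem prod_filter_two_mul_signCoeff_eq [DecidableEq ι] {N : Type*} [CommMonoid N]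
    (F : (ι → SignType) → N) :
    ∏ s with 2 * signCoeff s = -2 ^ Fintype.card ι, F s =
      ∏ i, F (Pi.single i 1) * F (Pi.single i (-1)) := by
  have h_filter :
      Finset.univ.filter (fun s : ι → SignType => 2 * signCoeff s = -2 ^ Fintype.card ι) =
        Finset.univ.image (fun i => Pi.single i 1) ∪
          Finset.univ.image (fun i => Pi.single i (-1)) := by
    ext s
    simp only [Finset.mem_filter_univ, two_mul_signCoeff_eq_neg_two_pow_card_iff,
      card_filter_ne_zero_eq_one_iff, Finset.mem_union, Finset.mem_image, Finset.mem_univ,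
      true_and, exists_or, @eq_comm _ _ s]
  have single_injective {ε : SignType} (hε : ε ≠ 0) :
      Function.Injective fun i : ι => (Pi.single i ε : ι → SignType) := fun _ _ h =>
    ((pi_single_eq_pi_single_iff_of_ne_zero hε).mp h).1
  have h_disjoint : Disjoint (Finset.univ.image fun i : ι => (Pi.single i 1 : ι → SignType))
      (Finset.univ.image fun i => Pi.single i (-1)) := by
    simp [Finset.disjoint_left, pi_single_eq_pi_single_iff_of_ne_zero]
  rw [h_filter, Finset.prod_union h_disjoint,
    Finset.prod_image (single_injective one_ne_zero).injOn,
    Finset.prod_image (single_injective (by decide)).injOn, Finset.prod_mul_distrib]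

theorem signedProd_single [DecidableEq ι] {M : Type*} [DivisionCommMonoid M] (x : ι → M)
    (i : ι) (ε : SignType) : signedProd x (Pi.single i ε) = x i ^ (ε : ℤ) := by
  rw [signedProd, Finset.prod_eq_single i (fun k _ hk => by simp [hk]) (by simp),
    Pi.single_eq_same]

end SignVectors

section ResultantElement

open MonoidAlgebra (single)

variable {ι : Type*} [Fintype ι]

/-- The element `∏ i, (2 - [xᵢ] - [xᵢ⁻¹])` of the monoid ring `ℤ[M]`. For nonzero `x` in a field,
the substitution `[u] ↦ uⁿ` turns it into the `n`-th cyclic resultant of `∏ (X - xᵢ)(X - xᵢ⁻¹)`. -/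
noncomputable def resultantElement {M : Type*} [DivisionCommMonoid M] (x : ι → M) :
    MonoidAlgebra ℤ M :=
  ∏ i, (2 - single (x i) 1 - single (x i)⁻¹ 1)

theorem lift_powMonoidHom_resultantElement {K : Type*} [Field K] {x : ι → K} (hx : ∀ i, x i ≠ 0)
    (n : ℕ) :
    MonoidAlgebra.lift ℤ K K (powMonoidHom n) (resultantElement x) =
      ∏ i, ((x i ^ n - 1) * ((x i)⁻¹ ^ n - 1)) := by
  rw [resultantElement, map_prod]
  refine Finset.prod_congr rfl fun i _ => ?_
  have h_mul_inv : x i ^ n * (x i)⁻¹ ^ n = 1 := by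
    rw [← mul_pow, mul_inv_cancel₀ (hx i), one_pow]
  simp only [map_sub, map_ofNat, MonoidAlgebra.lift_single, powMonoidHom_apply, one_smul]
  linear_combination -h_mul_inv

variable {M : Type*} [DivisionCommMonoid M] {x : ι → M}

theorem resultantElement_eq_sum [DecidableEq ι] (x : ι → M) :
    resultantElement x = ∑ s, single (signedProd x s) (signCoeff s) := by
  have h_factor (i : ι) : (2 - single (x i) 1 - single (x i)⁻¹ 1 : MonoidAlgebra ℤ M) =
      ∑ ε : SignType, single (x i ^ (ε : ℤ)) (if ε = 0 then 2 else -1) := by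
    have h_two : (2 : MonoidAlgebra ℤ M) = single 1 2 := rfl
    rw [SignType.univ_eq, Finset.sum_insert (by decide), Finset.sum_insert (by decide),
      Finset.sum_singleton, h_two]
    simp only [SignType.coe_zero, SignType.coe_neg_one, SignType.coe_one, zpow_zero,
      zpow_neg_one, zpow_one, SignType.neg_eq_zero_iff, one_ne_zero, if_true, if_false,
      MonoidAlgebra.single_neg]
    abel
  simp only [resultantElement, h_factor, Finset.prod_univ_sum, Fintype.piFinset_univ,
    signedProd, signCoeff, MonoidAlgebra.prod_single]

theorem support_resultantElement_subset [DecidableEq ι] [DecidableEq M] (x : ι → M) :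
    (resultantElement x).coeff.support ⊆ Finset.univ.image (signedProd x) := by
  rw [resultantElement_eq_sum, MonoidAlgebra.coeff_sum]
  refine Finsupp.support_finsetSum.trans (Finset.biUnion_subset.mpr fun s _ => ?_)
  exact Finsupp.support_single_subset.trans (by simp)

theorem coeff_resultantElement_signedProd (hx : Function.Injective (signedProd x))
    (s : ι → SignType) : (resultantElement x).coeff (signedProd x s) = signCoeff s := by
  classical
  simp [resultantElement_eq_sum, Finsupp.single_apply, hx.eq_iff]

theorem support_resultantElement [DecidableEq ι] [DecidableEq M]
    (hx : Function.Injective (signedProd x)) :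
    (resultantElement x).coeff.support = Finset.univ.image (signedProd x) := by
  refine (support_resultantElement_subset x).antisymm (Finset.image_subset_iff.mpr fun s _ => ?_)
  rw [Finsupp.mem_support_iff, coeff_resultantElement_signedProd hx]
  exact signCoeff_ne_zero s

theorem card_support_resultantElement_le (x : ι → M) :
    (resultantElement x).coeff.support.card ≤ 3 ^ Fintype.card ι := by
  classical
  calc (resultantElement x).coeff.support.card
      ≤ (Finset.univ.image (signedProd x)).card :=
        Finset.card_le_card (support_resultantElement_subset x)
    _ ≤ Fintype.card (ι → SignType) := Finset.card_image_le
    _ = 3 ^ Fintype.card ι := card_fun_signType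

theorem card_support_resultantElement_eq_iff :
    (resultantElement x).coeff.support.card = 3 ^ Fintype.card ι ↔
      Function.Injective (signedProd x) := by
  classical
  rw [← card_fun_signType, ← Finset.card_univ]
  constructor
  · intro h_card
    have h_le := h_card ▸ Finset.card_le_card (support_resultantElement_subset x)
    exact Set.injOn_univ.mp <| Finset.coe_univ (α := ι → SignType) ▸
      Finset.card_image_iff.mp (Finset.card_image_le.antisymm h_le)
  · intro hx
    rw [support_resultantElement hx, Finset.card_image_of_injective _ hx]

theorem prod_mul_inv_eq_prod_support_resultantElement {N : Type*} [CommMonoid N]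
    (hx : Function.Injective (signedProd x)) (F : M → N) :
    ∏ i, F (x i) * F (x i)⁻¹ =
      ∏ u ∈ (resultantElement x).coeff.support with
        2 * (resultantElement x).coeff u = -2 ^ Fintype.card ι, F u := by
  classical
  rw [support_resultantElement hx, Finset.filter_image, Finset.prod_image hx.injOn]
  simp only [coeff_resultantElement_signedProd hx]
  rw [prod_filter_two_mul_signCoeff_eq]
  simp only [signedProd_single, SignType.coe_one, SignType.coe_neg_one, zpow_one, zpow_neg_one]

theorem coeff_resultantElement_zero {K : Type*} [CommGroupWithZero K] {x : ι → K}
    (hx : ∀ i, x i ≠ 0) : (resultantElement x).coeff 0 = 0 := by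
  classical
  by_contra h
  obtain ⟨s, -, hs⟩ :=
    Finset.mem_image.mp (support_resultantElement_subset x (Finsupp.mem_support_iff.mpr h))
  exact signedProd_ne_zero hx s hs

end ResultantElement

theorem resultantElement_eq_of_cyclic_resultants_eq {K : Type*} [Field K] [CharZero K]
    {ι κ : Type*} [Fintype ι] [Fintype κ] {l : ι → K} {m : κ → K}
    (hl0 : ∀ i, l i ≠ 0) (hm0 : ∀ i, m i ≠ 0)
    (hres : ∀ n : ℕ, 1 ≤ n → n ≤ 3 ^ Fintype.card ι + 3 ^ Fintype.card κ →
      ∏ i, ((l i ^ n - 1) * ((l i)⁻¹ ^ n - 1)) = ∏ i, ((m i ^ n - 1) * ((m i)⁻¹ ^ n - 1))) :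
    resultantElement l = resultantElement m := by
  classical
  have h_card : (resultantElement l - resultantElement m).coeff.support.card ≤
      3 ^ Fintype.card ι + 3 ^ Fintype.card κ :=
    calc (resultantElement l - resultantElement m).coeff.support.card
        ≤ ((resultantElement l).coeff.support ∪ (resultantElement m).coeff.support).card :=
          Finset.card_le_card Finsupp.support_sub
      _ ≤ (resultantElement l).coeff.support.card + (resultantElement m).coeff.support.card :=
          Finset.card_union_le _ _
      _ ≤ 3 ^ Fintype.card ι + 3 ^ Fintype.card κ :=
          add_le_add (card_support_resultantElement_le l) (card_support_resultantElement_le m)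
  refine sub_eq_zero.mp (eq_zero_of_forall_lift_powMonoidHom_eq_zero ?_ fun n hn hn' => ?_)
  · rw [MonoidAlgebra.coeff_sub, Finsupp.notMem_support_iff, Finsupp.sub_apply,
      coeff_resultantElement_zero hl0, coeff_resultantElement_zero hm0, sub_zero]
  · rw [map_sub, lift_powMonoidHom_resultantElement hl0, lift_powMonoidHom_resultantElement hm0,
      hres n hn (hn'.trans h_card), sub_self]

theorem generic_reciprocal_determined_by_first_cyclic_resultants_general
    {K : Type*} [Field K] [CharZero K] {ι : Type*} [Fintype ι] {f g : Polynomial K} {l m : ι → K}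
    (hl0 : ∀ i, l i ≠ 0) (hm0 : ∀ i, m i ≠ 0)
    (hf : f = ∏ i, ((X - C (l i)) * (X - C (l i)⁻¹)))
    (hg : g = ∏ i, ((X - C (m i)) * (X - C (m i)⁻¹)))
    (hlquot : Set.InjOn
      (fun p : Finset ι × Finset ι => (∏ i ∈ p.1, l i) / ∏ i ∈ p.2, l i)
      {p | Disjoint p.1 p.2})
    (hres : ∀ n : ℕ, 1 ≤ n → n ≤ 2 * 3 ^ Fintype.card ι →
      ∏ i, ((l i ^ n - 1) * ((l i)⁻¹ ^ n - 1)) =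
        ∏ i, ((m i ^ n - 1) * ((m i)⁻¹ ^ n - 1))) :
    f = g := by
  have h_element : resultantElement l = resultantElement m :=
    resultantElement_eq_of_cyclic_resultants_eq hl0 hm0 (by simpa only [← two_mul] using hres)
  have hl : Function.Injective (signedProd l) := signedProd_injective_of_injOn hlquot
  have hm : Function.Injective (signedProd m) := by
    rwa [← card_support_resultantElement_eq_iff, ← h_element, card_support_resultantElement_eq_iff]
  rw [hf, hg, prod_mul_inv_eq_prod_support_resultantElement hl (fun u => X - C u),
    prod_mul_inv_eq_prod_support_resultantElement hm (fun u => X - C u), h_element]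

/-- A generic monic reciprocal polynomial of even degree `d = 2e` over an algebraically
closed field of characteristic zero, with roots `l i` and `(l i)⁻¹`, is determined by its
first `2·3^(d/2)` cyclic resultants.  Genericity: no root is a root of unity, and the
`3^(d/2)` quotients `λ_S / λ_T` over ordered pairs of disjoint subsets `S, T ⊆ {1,…,d/2}`
are pairwise distinct. -/
theorem generic_reciprocal_determined_by_first_cyclic_resultants
    {K : Type*} [Field K] [IsAlgClosed K] [CharZero K]
    (e : ℕ) (f g : Polynomial K) (l m : Fin e → K)
    (hl0 : ∀ i, l i ≠ 0) (hm0 : ∀ i, m i ≠ 0)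
    (hf : f = ∏ i, ((X - C (l i)) * (X - C (l i)⁻¹)))
    (hg : g = ∏ i, ((X - C (m i)) * (X - C (m i)⁻¹)))
    (hlunit : ∀ i, ∀ n : ℕ, 0 < n → l i ^ n ≠ 1)
    (hmunit : ∀ i, ∀ n : ℕ, 0 < n → m i ^ n ≠ 1)
    (hlquot : Set.InjOn
      (fun p : Finset (Fin e) × Finset (Fin e) => (∏ i ∈ p.1, l i) / ∏ i ∈ p.2, l i)
      {p | Disjoint p.1 p.2})
    (hmquot : Set.InjOn
      (fun p : Finset (Fin e) × Finset (Fin e) => (∏ i ∈ p.1, m i) / ∏ i ∈ p.2, m i)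
      {p | Disjoint p.1 p.2})
    (hres : ∀ n : ℕ, 1 ≤ n → n ≤ 2 * 3 ^ e →
      ∏ i, ((l i ^ n - 1) * ((l i)⁻¹ ^ n - 1)) =
        ∏ i, ((m i ^ n - 1) * ((m i)⁻¹ ^ n - 1))) :
    f = g := by
  exact generic_reciprocal_determined_by_first_cyclic_resultants_general hl0 hm0 hf hg hlquot
    (by simpa only [Fintype.card_fin] using hres)
end

section
/- Let K be an algebraically closed field of characteristic zero and let f, g ∈ K[x] be monic polynomials of degree d ≥ 1, each generic in the sense that none of its roots is a root of unity and its 2^d subset products of roots are pairwise distinct. If the cyclic resultants satisfy r_m(f) = r_m(g) for all 1 ≤ m ≤ 2^{d+1}, then r_m(f) = r_m(g) for all m ≥ 1; that is, the first 2^{d+1} cyclic resultants of a generic monic degree-d polynomial determine its full sequence of cyclic resultants. -/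
open Polynomial

/-!
Expanding `∏ i, (λ i ^ n - 1)` over subsets `S` writes the `n`-th cyclic resultant as a signed sum
of `n`-th powers of the subset products `λ_S`. The difference of two such sequences is therefore an
exponential sum `∑ j, c j * a j ^ n` with at most `2 ^ (d + 1)` terms. Reducing `X ^ n` modulo
`∏ j, (X - a j)` expresses each value of an exponential sum with `N` terms linearly in its first
`N` values, with coefficients independent of `j`, so it vanishes identically as soon as those do.
-/

section CyclicResultants

variable {R ι κ : Type*} [CommRing R] [Fintype ι] [Fintype κ]

theorem exists_forall_pow_eq_sum_mul_pow (a : ι → R) (n : ℕ) :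
    ∃ b : Fin (Fintype.card ι) → R, ∀ i, a i ^ n = ∑ k, b k * a i ^ (k : ℕ) := by
  nontriviality R
  let P : R[X] := ∏ i, (X - C (a i))
  have degree_lt : (X ^ n %ₘ P).degree < Fintype.card ι := by
    have hP : P.Monic := monic_prod_X_sub_C a Finset.univ
    have natDegree_P : P.natDegree = Fintype.card ι :=
      natDegree_finsetProd_X_sub_C_eq_card Finset.univ a
    exact natDegree_P ▸ (degree_modByMonic_lt _ hP).trans_le degree_le_natDegree
  refine ⟨fun k => (X ^ n %ₘ P).coeff k, fun i => ?_⟩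
  have hroot : P.eval (a i) = 0 := by
    rw [eval_prod]
    exact Finset.prod_eq_zero (Finset.mem_univ i) (by simp)
  calc a i ^ n = (X ^ n).eval (a i) := by simp
    _ = (X ^ n %ₘ P).eval (a i) := (eval₂_modByMonic_eq_self_of_root hroot).symm
    _ = ∑ k : Fin (Fintype.card ι), (X ^ n %ₘ P).coeff k * a i ^ (k : ℕ) := by
      rw [eval_eq_sum, ← sum_fin _ (by simp) degree_lt]

theorem sum_mul_pow_eq_zero_of_forall_lt_card {c a : ι → R}
    (h : ∀ n < Fintype.card ι, ∑ i, c i * a i ^ n = 0) (n : ℕ) : ∑ i, c i * a i ^ n = 0 := by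
  obtain ⟨b, hb⟩ := exists_forall_pow_eq_sum_mul_pow a n
  calc ∑ i, c i * a i ^ n = ∑ k, b k * ∑ i, c i * a i ^ (k : ℕ) := by
        simp only [hb, Finset.mul_sum, mul_left_comm]
        exact Finset.sum_comm
    _ = 0 := Finset.sum_eq_zero fun k _ => by rw [h k k.isLt, mul_zero]

theorem sum_mul_pow_eq_sum_mul_pow_of_forall_lt_card {c a : ι → R} {c' a' : κ → R}
    (h : ∀ n < Fintype.card ι + Fintype.card κ, ∑ i, c i * a i ^ n = ∑ j, c' j * a' j ^ n)
    (n : ℕ) : ∑ i, c i * a i ^ n = ∑ j, c' j * a' j ^ n := by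
  have sum_elim (k : ℕ) :
      ∑ x, Sum.elim c (-c') x * Sum.elim a a' x ^ k
        = ∑ i, c i * a i ^ k - ∑ j, c' j * a' j ^ k := by
    simp [Fintype.sum_sum_type, sub_eq_add_neg]
  rw [← sub_eq_zero, ← sum_elim]
  refine sum_mul_pow_eq_zero_of_forall_lt_card (fun k hk => ?_) n
  rw [sum_elim, sub_eq_zero]
  exact h k (by rwa [Fintype.card_sum] at hk)

theorem prod_pow_sub_one_eq_sum_finset [DecidableEq ι] (l : ι → R) (n : ℕ) :
    ∏ i, (l i ^ n - 1) = ∑ S : Finset ι, (-1) ^ Sᶜ.card * (∏ i ∈ S, l i) ^ n := by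
  simp only [sub_eq_add_neg, Fintype.prod_add, Finset.prod_const, Finset.prod_pow, mul_comm]

theorem first_cyclic_resultants_determine_all_general (l : ι → R) (m : κ → R)
    (hres : ∀ n : ℕ, 1 ≤ n → n ≤ 2 ^ Fintype.card ι + 2 ^ Fintype.card κ →
      ∏ i, (l i ^ n - 1) = ∏ j, (m j ^ n - 1)) (n : ℕ) (hn : 1 ≤ n) :
    ∏ i, (l i ^ n - 1) = ∏ j, (m j ^ n - 1) := by
  classical
  obtain ⟨n, rfl⟩ := Nat.exists_eq_add_of_le' hn
  simp only [prod_pow_sub_one_eq_sum_finset] at hres ⊢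
  -- One factor of each base moves into its coefficient, so that the exponents start at `0`.
  simp only [pow_succ', ← mul_assoc]
  refine sum_mul_pow_eq_sum_mul_pow_of_forall_lt_card (fun k hk => ?_) n
  rw [Fintype.card_finset, Fintype.card_finset] at hk
  simpa only [pow_succ', mul_assoc] using hres (k + 1) (Nat.succ_pos k) hk

end CyclicResultants

/-- For generic monic polynomials `f`, `g` of degree `d ≥ 1` over an algebraically closed
field of characteristic zero, if the first `2^(d+1)` cyclic resultants agree, then all
cyclic resultants agree. -/
theorem first_cyclic_resultants_determine_all
    {K : Type*} [Field K] [IsAlgClosed K] [CharZero K]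
    (d : ℕ) (hd : 1 ≤ d) (f g : Polynomial K) (l m : Fin d → K)
    (hf : f = ∏ i, (X - C (l i)))
    (hg : g = ∏ i, (X - C (m i)))
    (hlunit : ∀ i, ∀ n : ℕ, 0 < n → l i ^ n ≠ 1)
    (hmunit : ∀ i, ∀ n : ℕ, 0 < n → m i ^ n ≠ 1)
    (hlprod : Function.Injective fun S : Finset (Fin d) => ∏ i ∈ S, l i)
    (hmprod : Function.Injective fun S : Finset (Fin d) => ∏ i ∈ S, m i)
    (hres : ∀ n : ℕ, 1 ≤ n → n ≤ 2 ^ (d + 1) →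
      ∏ i, (l i ^ n - 1) = ∏ i, (m i ^ n - 1)) :
    ∀ n : ℕ, 1 ≤ n → ∏ i, (l i ^ n - 1) = ∏ i, (m i ^ n - 1) := by
  exact first_cyclic_resultants_determine_all_general l m fun n hn hle =>
    hres n hn (hle.trans_eq (by rw [Fintype.card_fin, pow_succ, mul_two]))
end

section
/- Let K be an algebraically closed field of characteristic zero and let f ∈ K[x] be a monic polynomial of degree d. Then the sequence {r_n(f)}_{n≥1} of cyclic resultants of f obeys a polynomial recurrence of length d + 1; that is, there exists a nonzero polynomial P ∈ K[x_1, …, x_{d+1}] such that P(r_n, r_{n+1}, …, r_{n+d}) = 0 for all n ≥ 1. -/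
open Polynomial

/-!
If `λ₁, …, λ_d` are the roots of `f`, then `r_{n+i} = ∏ j, (λ_j ^ i * λ_j ^ n - 1)` is the value at
the point `(λ₁ ^ n, …, λ_d ^ n)` of a polynomial in `d` variables that does not depend on `n`. For
`i = 0, …, d` these are `d + 1` polynomials in `d` variables, hence algebraically dependent, and any
dependence among them is a recurrence. Over a domain the roots are taken in an algebraic closure of
the fraction field; as that extension is algebraic, the dependence can still be chosen with
coefficients in the base ring.
-/

/-- A sequence `a` obeys a polynomial recurrence of length `ℓ` if some nonzero polynomial in `ℓ`
variables vanishes on every window `a n, …, a (n + ℓ - 1)`. Sequences start at index `1`, so the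
value `a 0` is irrelevant. -/
def ObeysPolynomialRecurrence {R : Type*} [CommSemiring R] (a : ℕ → R) (ℓ : ℕ) : Prop :=
  ∃ P : MvPolynomial (Fin ℓ) R, P ≠ 0 ∧
    ∀ n : ℕ, 1 ≤ n → MvPolynomial.eval (fun i : Fin ℓ => a (n + i)) P = 0

/-- The `m`-th cyclic resultant `Res(f, X ^ m - 1)` of `f`. -/
noncomputable def cyclicResultant {R : Type*} [CommRing R] (f : R[X]) (m : ℕ) : R :=
  f.resultant (X ^ m - 1)

section CyclicResultant

variable {R S : Type*} [CommRing R] [CommRing S]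

theorem cyclicResultant_eq_prod_roots [IsDomain R] {f : R[X]} (hf : f.Monic) (hsplits : f.Splits)
    (m : ℕ) : cyclicResultant f m = (f.roots.map fun l => l ^ m - 1).prod := by
  simp [cyclicResultant, resultant_eq_prod_eval f (X ^ m - 1) _ le_rfl hsplits, hf.leadingCoeff]

theorem cyclicResultant_map {φ : R →+* S} (hφ : Function.Injective φ) (f : R[X]) (m : ℕ) :
    cyclicResultant (f.map φ) m = φ (cyclicResultant f m) := by
  have hmap : (X ^ m - 1 : S[X]) = (X ^ m - 1 : R[X]).map φ := by simp
  rw [cyclicResultant, cyclicResultant, hmap, natDegree_map_eq_of_injective hφ,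
    natDegree_map_eq_of_injective hφ, resultant_map_map]

end CyclicResultant

theorem not_algebraicIndependent_mvPolynomial_of_card_lt {R S σ ι : Type*} [CommRing R]
    [CommRing S] [IsDomain S] [Algebra R S] [Algebra.IsAlgebraic R S] [Fintype σ] [Fintype ι]
    (hcard : Fintype.card σ < Fintype.card ι) (Q : ι → MvPolynomial σ S) :
    ¬ AlgebraicIndependent R Q := by
  intro hQ
  have hle := (hQ.extendScalars S).lift_cardinalMk_le_trdeg
  rw [MvPolynomial.trdeg_of_isDomain] at hle
  simp only [Cardinal.mk_fintype, Cardinal.lift_natCast, Nat.cast_le] at hle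
  exact hcard.not_ge hle

namespace ObeysPolynomialRecurrence

variable {R S : Type*} [CommRing R] [CommRing S] [Algebra R S] [FaithfulSMul R S] {a : ℕ → R}

theorem of_not_algebraicIndependent {A : Type*} [CommRing A] [Algebra R A] {ℓ : ℕ}
    {Q : Fin ℓ → A} (hQ : ¬ AlgebraicIndependent R Q) (φ : ℕ → A →ₐ[R] S)
    (hφ : ∀ n : ℕ, 1 ≤ n → ∀ i, φ n (Q i) = algebraMap R S (a (n + i))) :
    ObeysPolynomialRecurrence a ℓ := by
  rw [algebraicIndependent_iff] at hQ
  push Not at hQ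
  obtain ⟨P, hPQ, hP⟩ := hQ
  refine ⟨P, hP, fun n hn => FaithfulSMul.algebraMap_injective R S ?_⟩
  calc algebraMap R S (MvPolynomial.eval (fun i : Fin ℓ => a (n + i)) P)
      = MvPolynomial.aeval (fun i : Fin ℓ => algebraMap R S (a (n + i))) P :=
        (MvPolynomial.aeval_algebraMap_apply S _ P).symm
    _ = MvPolynomial.aeval (fun i => φ n (Q i)) P := by simp only [hφ n hn]
    _ = φ n (MvPolynomial.aeval Q P) := (MvPolynomial.comp_aeval_apply _ _ P).symm
    _ = algebraMap R S 0 := by rw [hPQ, map_zero, map_zero]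

variable [IsDomain S] [Algebra.IsAlgebraic R S]

theorem of_eq_eval_pow {σ : Type*} [Fintype σ] (v : σ → S) (G : MvPolynomial σ S)
    (ha : ∀ n : ℕ, 1 ≤ n → algebraMap R S (a n) = MvPolynomial.eval (v ^ n) G) :
    ObeysPolynomialRecurrence a (Fintype.card σ + 1) := by
  let Q (i : Fin (Fintype.card σ + 1)) : MvPolynomial σ S :=
    MvPolynomial.bind₁ (fun j => MvPolynomial.C (v j ^ (i : ℕ)) * MvPolynomial.X j) G
  have aeval_Q (n : ℕ) (i : Fin _) :
      MvPolynomial.aeval (v ^ n) (Q i) = MvPolynomial.eval (v ^ (n + i : ℕ)) G := by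
    rw [← MvPolynomial.aeval_eq_eval, MvPolynomial.aeval_bind₁]
    congr 2
    funext j
    simp [pow_add, mul_comm]
  refine of_not_algebraicIndependent
    (not_algebraicIndependent_mvPolynomial_of_card_lt (by simp) Q)
    (fun n => (MvPolynomial.aeval (v ^ n)).restrictScalars R) fun n hn i => ?_
  rw [ha _ (by lia), AlgHom.restrictScalars_apply, aeval_Q]

theorem of_eq_prod_pow_sub_one (s : Multiset S)
    (ha : ∀ n : ℕ, 1 ≤ n → algebraMap R S (a n) = (s.map fun l => l ^ n - 1).prod) :
    ObeysPolynomialRecurrence a (s.card + 1) := by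
  classical
  rw [← s.card_coe]
  refine of_eq_eval_pow (fun l : s => (l : S)) (∏ l : s, (MvPolynomial.X l - 1)) fun n hn => ?_
  rw [ha n hn, ← Multiset.map_univ, Finset.prod_map_val]
  simp

end ObeysPolynomialRecurrence

theorem cyclic_resultants_polynomial_recurrence_general
    {R : Type*} [CommRing R] [IsDomain R]
    (d : ℕ) (f : R[X]) (hf : f.Monic) (hdeg : f.natDegree = d)
    (r : ℕ → R) (hr : ∀ m : ℕ, 1 ≤ m → r m = cyclicResultant f m) :
    ObeysPolynomialRecurrence r (d + 1) := by
  let L := AlgebraicClosure (FractionRing R)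
  have : Algebra.IsAlgebraic R L :=
    (IsFractionRing.comap_isAlgebraic_iff (K := FractionRing R)).mpr inferInstance
  have : FaithfulSMul R L := .trans R (FractionRing R) L
  have hinj : Function.Injective (algebraMap R L) := FaithfulSMul.algebraMap_injective R L
  have hsplits : (f.map (algebraMap R L)).Splits := IsAlgClosed.splits _
  have hcard : (f.map (algebraMap R L)).roots.card = d := by
    rw [← hsplits.natDegree_eq_card_roots, hf.natDegree_map, hdeg]
  rw [← hcard]
  refine .of_eq_prod_pow_sub_one _ fun n hn => ?_
  rw [hr n hn, ← cyclicResultant_map hinj, cyclicResultant_eq_prod_roots (hf.map _) hsplits]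

/-- The cyclic resultants `r n = ∏ (λ^n - 1)` (product over the roots, with multiplicity,
of a monic polynomial `f` of degree `d` over an algebraically closed field of
characteristic zero) satisfy a polynomial recurrence of length `d + 1`. -/
theorem cyclic_resultants_polynomial_recurrence
    {K : Type*} [Field K] [IsAlgClosed K] [CharZero K]
    (d : ℕ) (f : Polynomial K) (hf : f.Monic) (hdeg : f.natDegree = d)
    (r : ℕ → K) (hr : ∀ m : ℕ, 1 ≤ m → r m = (f.roots.map fun l => l ^ m - 1).prod) :
    ∃ P : MvPolynomial (Fin (d + 1)) K, P ≠ 0 ∧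
      ∀ n : ℕ, 1 ≤ n → MvPolynomial.eval (fun i : Fin (d + 1) => r (n + i)) P = 0 :=
  cyclic_resultants_polynomial_recurrence_general d f hf hdeg r fun m hm =>
    (hr m hm).trans (cyclicResultant_eq_prod_roots hf (IsAlgClosed.splits f) m).symm
end

section
/- Let K be an algebraically closed field of characteristic zero, let p_1, …, p_t ∈ K[x] be nonzero polynomials and μ_1, …, μ_t distinct nonzero elements of K, and define a_n = ∑_{i=1}^t p_i(n) μ_i^n for n ≥ 1. Let A ⊆ K^* be the multiplicative subgroup generated by μ_1, …, μ_t and let r be the rank of A (the torsion-free rank of the finitely generated abelian group A, i.e. dim_ℚ(ℚ ⊗_ℤ A)). Then the sequence {a_n}_{n≥1} obeys a polynomial recurrence of length r + 2. -/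
open scoped TensorProduct

/-!
A recurrence of length `r + 2` is an algebraic relation between `r + 2` shifts of the sequence,
and all these shifts lie in the algebra generated by the sequence `n ↦ n` and the geometric
sequences `n ↦ u ^ n` with `u ∈ A`. This algebra is not a domain when `A` has torsion, but an
algebraically independent family stays so modulo a suitable prime ideal. In a domain, the
transcendence degree is attained on a subset of any generating set, and geometric sequences
that are algebraically independent are multiplicatively independent, so that at most `r` of them
can occur. The transcendence degree is therefore at most `r + 1`.
-/

section AlgebraicIndependence

variable {R A ι G : Type*} [CommRing R] [CommRing A] [Algebra R A] [CommGroup G]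

theorem linearIndependent_int_of_nat {M : Type*} [AddCommGroup M] {v : ι → M}
    (hv : LinearIndependent ℕ v) : LinearIndependent ℤ v := by
  rw [linearIndependent_iff']
  intro s c hc i hi
  have hsum : ∑ j ∈ s, (c j).toNat • v j = ∑ j ∈ s, (-c j).toNat • v j := by
    rw [← sub_eq_zero, ← Finset.sum_sub_distrib, ← hc]
    refine Finset.sum_congr rfl fun j _ ↦ ?_
    rw [← natCast_zsmul, ← natCast_zsmul, ← sub_smul, Int.toNat_sub_toNat_neg]
  have := linearIndependent_iff'ₛ.mp hv s _ _ hsum i hi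
  omega

theorem linearIndependent_ofMul_of_algebraicIndependent [Nontrivial R] {x : ι → Aˣ}
    (hx : AlgebraicIndependent R fun i ↦ (x i : A)) :
    LinearIndependent ℤ fun i ↦ Additive.ofMul (x i) := by
  refine linearIndependent_int_of_nat fun s t hst ↦ ?_
  have aeval_monomial (s : ι →₀ ℕ) :
      MvPolynomial.aeval (fun i ↦ (x i : A)) (MvPolynomial.monomial s (1 : R)) =
        (Finsupp.linearCombination ℕ (fun i ↦ Additive.ofMul (x i)) s).toMul := by
    simp [MvPolynomial.aeval_monomial, Finsupp.linearCombination_apply, Finsupp.sum,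
      Finsupp.prod]
  refine MvPolynomial.monomial_left_injective one_ne_zero (hx ?_)
  rw [aeval_monomial, aeval_monomial, hst]

theorem exists_isPrime_algebraicIndependent_mk [IsDomain R] {x : ι → A}
    (hx : AlgebraicIndependent R x) :
    ∃ P : Ideal A, P.IsPrime ∧ AlgebraicIndependent R fun i ↦ Ideal.Quotient.mkₐ R P (x i) := by
  obtain ⟨P, hP, hcomap⟩ := Ideal.exists_comap_eq_of_mem_minimalPrimes_of_injective
    (f := (MvPolynomial.aeval (R := R) x).toRingHom) hx ⊥
    (by simp [IsDomain.minimalPrimes_eq_singleton_bot])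
  refine ⟨P, hP, algebraicIndependent_iff.mpr fun p hp ↦ ?_⟩
  rw [← Ideal.mem_bot, ← hcomap, Ideal.mem_comap, ← Ideal.Quotient.eq_zero_iff_mem, ← hp]
  exact MvPolynomial.comp_aeval_apply x (Ideal.Quotient.mkₐ R P) p

open AlgebraicIndependent

theorem eRk_range_units_le_rank [FaithfulSMul R A] [IsDomain A] (φ : G →* Aˣ) :
    (matroid R A).eRk (Set.range fun g ↦ (φ g : A)) ≤
      Cardinal.toENat (Module.rank ℤ (Additive G)) := by
  have : Nontrivial R := Module.nontrivial R A
  obtain ⟨s, hs⟩ := (matroid R A).exists_isBasis (Set.range fun g ↦ (φ g : A))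
  choose g hg using fun a : s ↦ hs.subset a.2
  have hind : AlgebraicIndependent R fun a : s ↦ (φ (g a) : A) := by
    simpa only [hg] using! matroid_indep_iff.mp hs.indep
  have hlin : LinearIndependent ℤ fun a ↦ Additive.ofMul (g a) :=
    (linearIndependent_ofMul_of_algebraicIndependent hind).of_comp
      (MonoidHom.toAdditive φ).toIntLinearMap
  rw [hs.eRk_eq_encard]
  simpa using OrderHom.mono (β := ℕ∞) Cardinal.toENat hlin.cardinal_lift_le_rank

theorem card_le_rank_add_one_of_mem_adjoin [IsDomain R] {x : A} {φ : G →* Aˣ} {f : ι → A}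
    (hf : AlgebraicIndependent R f)
    (hmem : ∀ i, f i ∈ Algebra.adjoin R (insert x (Set.range fun g ↦ (φ g : A)))) :
    ENat.card ι ≤ Cardinal.toENat (Module.rank ℤ (Additive G)) + 1 := by
  obtain ⟨P, hP, hfP⟩ := exists_isPrime_algebraicIndependent_mk hf
  let π := Ideal.Quotient.mkₐ R P
  let ψ : G →* (A ⧸ P)ˣ := (Units.map (π : A →* A ⧸ P)).comp φ
  have : FaithfulSMul R (A ⧸ P) :=
    (faithfulSMul_iff_algebraMap_injective R _).mpr hfP.algebraMap_injective
  let M := matroid R (A ⧸ P)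
  let S : Set (A ⧸ P) := insert (π x) (Set.range fun g ↦ (ψ g : A ⧸ P))
  have himage : π '' insert x (Set.range fun g ↦ (φ g : A)) = S := by
    rw [Set.image_insert_eq, ← Set.range_comp]
    rfl
  have hclosure : Set.range (fun i ↦ π (f i)) ⊆ M.closure S := by
    rintro _ ⟨i, rfl⟩
    have hi : π (f i) ∈ Algebra.adjoin R S := by
      rw [← himage, ← AlgHom.map_adjoin]
      exact ⟨f i, hmem i, rfl⟩
    rw [matroid_closure_eq]
    exact isAlgebraic_algebraMap (⟨_, hi⟩ : Algebra.adjoin R S)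
  calc ENat.card ι ≤ (Set.range fun i ↦ π (f i)).encard := hfP.injective.encard_range
    _ = M.eRk (Set.range fun i ↦ π (f i)) :=
        (matroid_indep_iff.mpr hfP.to_subtype_range).eRk_eq_encard.symm
    _ ≤ M.eRk (M.closure S) := M.eRk_mono hclosure
    _ = M.eRk S := M.eRk_closure_eq S
    _ ≤ M.eRk (Set.range fun g ↦ (ψ g : A ⧸ P)) + 1 := M.eRk_insert_le_add_one _ _
    _ ≤ Cardinal.toENat (Module.rank ℤ (Additive G)) + 1 := by
        gcongr
        exact eRk_range_units_le_rank ψ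

end AlgebraicIndependence

section ExponentialPolynomials

variable {R : Type*} [CommRing R]

variable (R) in
/-- The homomorphism sending a unit `u` to the geometric sequence `n ↦ u ^ n`, which is a unit of
the algebra of all sequences. -/
def geometricSequence : Rˣ →* (ℕ → R)ˣ :=
  Units.map (MonoidHom.pi fun n ↦ powMonoidHom n)

@[simp]
theorem geometricSequence_apply (u : Rˣ) (n : ℕ) :
    (geometricSequence R u : ℕ → R) n = (u : R) ^ n :=
  rfl

/-- The algebra of exponential polynomials with bases in `Γ`: the sequences of the form
`n ↦ ∑ i, p i (n) * u i ^ n` with `p i` polynomials and `u i ∈ Γ`. The generator `Nat.cast`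
is the sequence `n ↦ n`. -/
def exponentialPolynomials (Γ : Subgroup Rˣ) : Subalgebra R (ℕ → R) :=
  Algebra.adjoin R
    (insert Nat.cast (Set.range fun u : Γ ↦ (geometricSequence R u : ℕ → R)))

variable {Γ : Subgroup Rˣ}

theorem natCast_mem_exponentialPolynomials : Nat.cast ∈ exponentialPolynomials Γ :=
  Algebra.subset_adjoin (Set.mem_insert _ _)

theorem geometricSequence_mem_exponentialPolynomials {u : Rˣ} (hu : u ∈ Γ) :
    (geometricSequence R u : ℕ → R) ∈ exponentialPolynomials Γ :=
  Algebra.subset_adjoin (Set.mem_insert_of_mem _ ⟨⟨u, hu⟩, rfl⟩)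

theorem sum_eval_mul_pow_mem_exponentialPolynomials {ι : Type*} [Fintype ι]
    (p : ι → Polynomial R) {μ : ι → Rˣ} (hμ : ∀ i, μ i ∈ Γ) :
    (fun n : ℕ ↦ ∑ i, (p i).eval (n : R) * (μ i : R) ^ n) ∈ exponentialPolynomials Γ := by
  have hsum : (fun n : ℕ ↦ ∑ i, (p i).eval (n : R) * (μ i : R) ^ n) =
      ∑ i, Polynomial.aeval (Nat.cast : ℕ → R) (p i) * geometricSequence R (μ i) := by
    ext n
    simp [Polynomial.aeval_pi_apply, Polynomial.coe_aeval_eq_eval]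
  rw [hsum]
  exact sum_mem fun i _ ↦ mul_mem
    (Algebra.adjoin_singleton_le natCast_mem_exponentialPolynomials
      (Polynomial.aeval_mem_adjoin_singleton R _))
    (geometricSequence_mem_exponentialPolynomials (hμ i))

theorem shift_mem_exponentialPolynomials {b : ℕ → R} (hb : b ∈ exponentialPolynomials Γ)
    (k : ℕ) : (fun n ↦ b (n + k)) ∈ exponentialPolynomials Γ := by
  induction hb using Algebra.adjoin_induction with
  | mem b hb =>
    obtain rfl | ⟨u, rfl⟩ := hb
    · convert add_mem natCast_mem_exponentialPolynomials
        ((exponentialPolynomials Γ).algebraMap_mem (k : R)) using 1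
      ext n
      simp
    · convert mul_mem (geometricSequence_mem_exponentialPolynomials u.2)
        ((exponentialPolynomials Γ).algebraMap_mem (((u : Rˣ) : R) ^ k)) using 1
      ext n
      simp [pow_add]
  | algebraMap c => exact (exponentialPolynomials Γ).algebraMap_mem c
  | add b c _ _ hb hc => exact add_mem hb hc
  | mul b c _ _ hb hc => exact mul_mem hb hc

theorem exists_polynomial_relation_of_mem_exponentialPolynomials [IsDomain R] {ι : Type*}
    {f : ι → ℕ → R} (hf : ∀ i, f i ∈ exponentialPolynomials Γ)
    (hcard : Cardinal.toENat (Module.rank ℤ (Additive Γ)) + 1 < ENat.card ι) :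
    ∃ P : MvPolynomial ι R, P ≠ 0 ∧ ∀ n, MvPolynomial.eval (fun i ↦ f i n) P = 0 := by
  have hdep : ¬ AlgebraicIndependent R f := fun hind ↦
    hcard.not_ge <| card_le_rank_add_one_of_mem_adjoin
      (φ := (geometricSequence R).comp Γ.subtype) hind hf
  rw [algebraicIndependent_iff] at hdep
  push Not at hdep
  obtain ⟨P, hP, hP0⟩ := hdep
  refine ⟨P, hP0, fun n ↦ ?_⟩
  have := MvPolynomial.comp_aeval_apply (f := f) (Pi.evalAlgHom R (fun _ : ℕ ↦ R) n) P
  rw [hP, map_zero] at this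
  exact this.symm

end ExponentialPolynomials

theorem polynomial_recurrence_of_linear_recurrence_general
    {R ι : Type*} [CommRing R] [IsDomain R] [Fintype ι]
    (p : ι → Polynomial R) (μ : ι → Rˣ)
    (a : ℕ → R) (ha : ∀ n : ℕ, 1 ≤ n → a n = ∑ i, (p i).eval (n : R) * (μ i : R) ^ n)
    (r : ℕ)
    (hr : r = Module.finrank ℚ
      (ℚ ⊗[ℤ] Additive ↥(Subgroup.closure (Set.range μ)))) :
    ∃ P : MvPolynomial (Fin (r + 2)) R, P ≠ 0 ∧
      ∀ n : ℕ, 1 ≤ n → MvPolynomial.eval (fun i : Fin (r + 2) => a (n + i)) P = 0 := by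
  let Γ := Subgroup.closure (Set.range μ)
  have hμ (i : ι) : μ i ∈ Γ := Subgroup.subset_closure (Set.mem_range_self i)
  have hmem (i : Fin (r + 2)) : (fun n ↦ a (n + (1 + i))) ∈ exponentialPolynomials Γ := by
    convert shift_mem_exponentialPolynomials
      (sum_eval_mul_pow_mem_exponentialPolynomials p hμ) (1 + i) using 2 with n
    exact ha _ (by omega)
  have : Module.Finite ℤ (Additive Γ) :=
    Module.Finite.iff_addGroup_fg.mpr inferInstance
  have hrank : Cardinal.toENat (Module.rank ℤ (Additive Γ)) = r := by
    rw [hr, (TensorProduct.isBaseChange ℤ (Additive Γ) ℚ).finrank_eq, ← Module.finrank_eq_rank,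
      Cardinal.toENat_nat]
  obtain ⟨P, hP0, hP⟩ := exists_polynomial_relation_of_mem_exponentialPolynomials hmem
    (by rw [hrank, ENat.card_eq_coe_natCard, Nat.card_fin]; exact_mod_cast (r + 1).lt_succ_self)
  refine ⟨P, hP0, fun n hn ↦ ?_⟩
  obtain ⟨m, rfl⟩ := Nat.exists_eq_add_of_le' hn
  simpa only [add_assoc] using hP m

/-- Theorem on polynomial recurrences for exponential-polynomial sequences:
if `a n = ∑ p i (n) * μ i ^ n` with nonzero polynomials `p i` and distinct nonzero
`μ i`, and `r` is the rank (torsion-free rank, `dim_ℚ (ℚ ⊗_ℤ A)`) of the multiplicative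
subgroup `A ≤ Kˣ` generated by the `μ i`, then `{a n}` obeys a polynomial recurrence of
length `r + 2`. -/
theorem polynomial_recurrence_of_linear_recurrence
    {K : Type*} [Field K] [IsAlgClosed K] [CharZero K]
    (t : ℕ) (p : Fin t → Polynomial K) (hp : ∀ i, p i ≠ 0)
    (μ : Fin t → Kˣ) (hμ : Function.Injective μ)
    (a : ℕ → K) (ha : ∀ n : ℕ, 1 ≤ n → a n = ∑ i, (p i).eval (n : K) * (μ i : K) ^ n)
    (r : ℕ)
    (hr : r = Module.finrank ℚ
      (ℚ ⊗[ℤ] Additive ↥(Subgroup.closure (Set.range μ)))) :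
    ∃ P : MvPolynomial (Fin (r + 2)) K, P ≠ 0 ∧
      ∀ n : ℕ, 1 ≤ n → MvPolynomial.eval (fun i : Fin (r + 2) => a (n + i)) P = 0 := by
  exact polynomial_recurrence_of_linear_recurrence_general p μ a ha r hr
end

section
/- Let K be an algebraically closed field of characteristic zero, let c_1, …, c_t be nonzero elements of K and μ_1, …, μ_t distinct nonzero elements of K, and define a_n = ∑_{i=1}^t c_i μ_i^n for n ≥ 1 (so {a_n} satisfies a simple linear recurrence). Let A ⊆ K^* be the multiplicative subgroup generated by μ_1, …, μ_t and let r be the rank of A (i.e. dim_ℚ(ℚ ⊗_ℤ A)). Then the sequence {a_n}_{n≥1} obeys a polynomial recurrence of length r + 1. -/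
open scoped TensorProduct

/-!
The group algebra `K[A]` has transcendence degree at most `r = rank A`: an algebraically
independent family stays independent modulo a suitable prime, and in the quotient domain every
element of `A` has a nonzero power in the subgroup generated by `r` independent ones, so everything
is algebraic over those `r` elements. On the other hand, for `n ≥ 1` the term
`a (n + j) = ∑ i, c i * μ i ^ j * μ i ^ n` is the image of `∑ i, (c i * μ i ^ j) • [μ i] ∈ K[A]`
under the `K`-algebra map `K[A] → K` sending `[g]` to `g ^ n`. A polynomial relation between the
`r + 1` elements obtained for `j = 0, …, r` is therefore the required recurrence.
-/

open Algebra Cardinal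

universe u v w

theorem exists_set_forall_smul_mem_span (R : Type u) (M : Type v) [Ring R] [Nontrivial R]
    [AddCommGroup M] [Module R M] :
    ∃ s : Set M, #s ≤ Module.rank R M ∧ ∀ m, ∃ b : R, b ≠ 0 ∧ b • m ∈ Submodule.span R s := by
  obtain ⟨s, indep, maximal⟩ := exists_maximal_linearIndepOn R (id : M → M)
  rw [Set.image_id] at maximal
  refine ⟨s, indep.linearIndependent.cardinal_le_rank, fun m => ?_⟩
  by_cases hm : m ∈ s
  · exact ⟨1, one_ne_zero, (one_smul R m).symm ▸ Submodule.subset_span hm⟩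
  · exact maximal m hm

theorem exists_isPrime_algebraicIndependent_quotient {k R ι : Type*} [CommRing k]
    [IsDomain k] [CommRing R] [Algebra k R] {x : ι → R} (hx : AlgebraicIndependent k x) :
    ∃ p : Ideal R, p.IsPrime ∧ AlgebraicIndependent k (Ideal.Quotient.mkₐ k p ∘ x) := by
  let S : Submonoid R :=
    (nonZeroDivisors (MvPolynomial ι k)).map (MvPolynomial.aeval x : _ →ₐ[k] R)
  have disjoint_bot : Disjoint ((⊥ : Ideal R) : Set R) S := by
    rw [Set.disjoint_right]
    rintro _ ⟨P, hP, rfl⟩ hzero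
    exact nonZeroDivisors.ne_zero hP (hx.eq_zero_of_aeval_eq_zero P hzero)
  obtain ⟨p, hp, -, disjoint⟩ := Ideal.exists_le_prime_disjoint ⊥ S disjoint_bot
  refine ⟨p, hp, algebraicIndependent_iff.mpr fun P hP => ?_⟩
  rw [Function.comp_def, ← MvPolynomial.comp_aeval_apply] at hP
  by_contra hne
  exact Set.disjoint_left.mp disjoint (Ideal.Quotient.eq_zero_iff_mem.mp hP)
    ⟨P, mem_nonZeroDivisors_of_ne_zero hne, rfl⟩

theorem trdeg_le_of_forall_isPrime {k : Type u} {R : Type v} [CommRing k] [IsDomain k]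
    [CommRing R] [Algebra k R] {κ : Cardinal.{v}}
    (h : ∀ p : Ideal R, p.IsPrime → trdeg k (R ⧸ p) ≤ κ) : trdeg k R ≤ κ := by
  refine ciSup_le' fun ⟨s, hs⟩ => ?_
  obtain ⟨p, hp, hsp⟩ := exists_isPrime_algebraicIndependent_quotient hs
  exact hsp.cardinalMk_le_trdeg.trans (h p hp)

section IntegerSpan

variable {M B D : Type*} [AddCommGroup M] [CommRing B] [IsDomain B] [CommRing D] [Algebra B D]
  (f : Multiplicative M →* D) {s : Set M}

theorem isAlgebraic_of_mem_span_int (hs : ∀ m ∈ s, IsAlgebraic B (f (.ofAdd m))) {m : M}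
    (hm : m ∈ Submodule.span ℤ s) : IsAlgebraic B (f (.ofAdd m)) := by
  rw [← Submodule.mem_toAddSubgroup, Submodule.span_int_eq_addSubgroupClosure] at hm
  induction hm using AddSubgroup.closure_induction with
  | mem m hm => exact hs m hm
  | zero => simpa using isAlgebraic_one
  | add m m' _ _ hm hm' => simpa only [ofAdd_add, map_mul] using hm.mul hm'
  | neg m _ hm =>
    let : Invertible (f (.ofAdd m)) := ⟨f (.ofAdd (-m)), by simp [← map_mul], by simp [← map_mul]⟩
    exact hm.invOf

theorem isAlgebraic_of_zsmul_mem_span_int (hs : ∀ m ∈ s, IsAlgebraic B (f (.ofAdd m)))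
    {n : ℤ} (hn : n ≠ 0) {m : M} (hm : n • m ∈ Submodule.span ℤ s) :
    IsAlgebraic B (f (.ofAdd m)) := by
  have hm_natAbs : n.natAbs • m ∈ Submodule.span ℤ s := by
    rw [← natCast_zsmul, ← Int.sign_mul_self_eq_natAbs, mul_smul]
    exact Submodule.smul_mem _ _ hm
  refine IsAlgebraic.of_pow (Int.natAbs_pos.mpr hn) ?_
  rw [← map_pow, ← ofAdd_nsmul]
  exact isAlgebraic_of_mem_span_int f hs hm_natAbs

end IntegerSpan

theorem lift_trdeg_le_rank_of_surjective {k : Type u} {M : Type v} {D : Type w} [CommRing k]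
    [AddCommGroup M] [CommRing D] [IsDomain D] [Algebra k D] (π : AddMonoidAlgebra k M →ₐ[k] D)
    (hπ : Function.Surjective π) : lift.{v} (trdeg k D) ≤ lift.{w} (Module.rank ℤ M) := by
  let f : Multiplicative M →* D := (π : AddMonoidAlgebra k M →* D).comp (AddMonoidAlgebra.of k M)
  obtain ⟨s, hs_card, hs_span⟩ := exists_set_forall_smul_mem_span ℤ M
  let g : M → D := fun m => f (.ofAdd m)
  let B := adjoin k (g '' s)
  have isAlgebraic_base : ∀ m ∈ s, IsAlgebraic B (g m) := fun m hm =>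
    isAlgebraic_algebraMap (⟨g m, subset_adjoin ⟨m, hm, rfl⟩⟩ : B)
  have : Algebra.IsAlgebraic B D := by
    refine ⟨hπ.forall.mpr fun z => ?_⟩
    induction z using AddMonoidAlgebra.induction_on with
    | of m =>
      obtain ⟨n, hn, hm⟩ := hs_span m
      exact isAlgebraic_of_zsmul_mem_span_int f isAlgebraic_base hn hm
    | add z z' hz hz' => simpa only [map_add] using hz.add hz'
    | smul c z hz => simpa only [map_smul, algebraMap_smul] using hz.smul (algebraMap k B c)
  calc
    lift.{v} (trdeg k D) ≤ lift.{v} #(g '' s) :=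
      lift_le.mpr (IsAlgebraic.trdeg_le_cardinalMk k (g '' s))
    _ ≤ lift.{w} #s := mk_image_le_lift
    _ ≤ lift.{w} (Module.rank ℤ M) := lift_le.mpr hs_card

theorem trdeg_addMonoidAlgebra_le_rank (k : Type u) [CommRing k] [IsDomain k] (M : Type v)
    [AddCommGroup M] : trdeg k (AddMonoidAlgebra k M) ≤ lift.{u} (Module.rank ℤ M) := by
  refine trdeg_le_of_forall_isPrime fun p _ => ?_
  have hle := lift_trdeg_le_rank_of_surjective (Ideal.Quotient.mkₐ k p)
    (Ideal.Quotient.mkₐ_surjective k p)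
  rwa [lift_id'.{v, max u v}, lift_umax.{v, u}] at hle

theorem exists_aeval_eq_zero_of_finrank_lt {k ι M : Type*} [CommRing k] [IsDomain k] [Fintype ι]
    [AddCommGroup M] [Module.Finite ℤ M] (z : ι → AddMonoidAlgebra k M)
    (h : Module.finrank ℤ M < Fintype.card ι) :
    ∃ P : MvPolynomial ι k, P ≠ 0 ∧ MvPolynomial.aeval z P = 0 := by
  have dependent : ¬ AlgebraicIndependent k z := fun hz => by
    have card_le_rank := hz.lift_cardinalMk_le_trdeg.trans
      (lift_le.mpr (trdeg_addMonoidAlgebra_le_rank k M))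
    rw [← Module.finrank_eq_rank, mk_fintype] at card_le_rank
    simp only [lift_natCast, Nat.cast_le] at card_le_rank
    exact h.not_ge card_le_rank
  simpa [algebraicIndependent_iff, and_comm] using dependent

theorem exists_eval_shifts_eq_zero {K ι κ M : Type*} [CommRing K] [IsDomain K] [Fintype ι]
    [Fintype κ] [AddCommGroup M] [Module.Finite ℤ M] (χ : Multiplicative M →* K) (m : ι → M)
    (c : ι → K) (d : κ → ℕ) (h : Module.finrank ℤ M < Fintype.card κ) :
    ∃ P : MvPolynomial κ K, P ≠ 0 ∧
      ∀ n : ℕ, MvPolynomial.eval (fun j => ∑ i, c i * χ (.ofAdd (m i)) ^ (n + d j)) P = 0 := by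
  let z (j : κ) : AddMonoidAlgebra K M := ∑ i, .single (m i) (c i * χ (.ofAdd (m i)) ^ d j)
  obtain ⟨P, hP, hPz⟩ := exists_aeval_eq_zero_of_finrank_lt z h
  refine ⟨P, hP, fun n => ?_⟩
  let powerMap : AddMonoidAlgebra K M →ₐ[K] K := AddMonoidAlgebra.lift K K M (χ ^ n)
  have powerMap_z (j : κ) : powerMap (z j) = ∑ i, c i * χ (.ofAdd (m i)) ^ (n + d j) := by
    simp only [z, powerMap, map_sum, AddMonoidAlgebra.lift_single, MonoidHom.pow_apply,
      smul_eq_mul, mul_assoc, ← pow_add, add_comm]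
  simp_rw [← powerMap_z, ← MvPolynomial.aeval_eq_eval, ← MvPolynomial.comp_aeval_apply, hPz,
    map_zero]

theorem polynomial_recurrence_of_simple_linear_recurrence_general
    {K ι : Type*} [CommRing K] [IsDomain K] [Fintype ι] (c : ι → K) (μ : ι → Kˣ)
    (a : ℕ → K) (ha : ∀ n : ℕ, 1 ≤ n → a n = ∑ i, c i * (μ i : K) ^ n)
    (r : ℕ)
    (hr : r = Module.finrank ℚ
      (ℚ ⊗[ℤ] Additive ↥(Subgroup.closure (Set.range μ)))) :
    ∃ P : MvPolynomial (Fin (r + 1)) K, P ≠ 0 ∧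
      ∀ n : ℕ, 1 ≤ n → MvPolynomial.eval (fun i : Fin (r + 1) => a (n + i)) P = 0 := by
  let A := Subgroup.closure (Set.range μ)
  have : Group.FG A := Group.closure_finite_fg _
  have : Module.Finite ℤ (Additive A) := Module.Finite.iff_addGroup_fg.mpr inferInstance
  have finrank_lt : Module.finrank ℤ (Additive A) < Fintype.card (Fin (r + 1)) := by
    rw [Fintype.card_fin, hr, (TensorProduct.isBaseChange ℤ (Additive A) ℚ).finrank_eq]
    exact Nat.lt_succ_self _
  let χ : Multiplicative (Additive A) →* K :=
    ((Units.coeHom K).comp A.subtype).comp (MulEquiv.multiplicativeAdditive A).toMonoidHom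
  let ν (i : ι) : Additive A := .ofMul ⟨μ i, Subgroup.subset_closure ⟨i, rfl⟩⟩
  obtain ⟨P, hP, hPeval⟩ := exists_eval_shifts_eq_zero χ ν c Fin.val finrank_lt
  refine ⟨P, hP, fun n hn => ?_⟩
  have a_shift (j : Fin (r + 1)) : a (n + j) = ∑ i, c i * χ (.ofAdd (ν i)) ^ (n + (j : ℕ)) :=
    ha _ (hn.trans (Nat.le_add_right n j))
  simpa only [a_shift] using hPeval n

/-- Simple-linear-recurrence case: if `a n = ∑ c i * μ i ^ n` with nonzero constants
`c i` and distinct nonzero `μ i`, and `r` is the rank (`dim_ℚ (ℚ ⊗_ℤ A)`) of the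
multiplicative subgroup `A ≤ Kˣ` generated by the `μ i`, then `{a n}` obeys a polynomial
recurrence of length `r + 1`. -/
theorem polynomial_recurrence_of_simple_linear_recurrence
    {K : Type*} [Field K] [IsAlgClosed K] [CharZero K]
    (t : ℕ) (c : Fin t → K) (hc : ∀ i, c i ≠ 0)
    (μ : Fin t → Kˣ) (hμ : Function.Injective μ)
    (a : ℕ → K) (ha : ∀ n : ℕ, 1 ≤ n → a n = ∑ i, c i * (μ i : K) ^ n)
    (r : ℕ)
    (hr : r = Module.finrank ℚ
      (ℚ ⊗[ℤ] Additive ↥(Subgroup.closure (Set.range μ)))) :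
    ∃ P : MvPolynomial (Fin (r + 1)) K, P ≠ 0 ∧
      ∀ n : ℕ, 1 ≤ n → MvPolynomial.eval (fun i : Fin (r + 1) => a (n + i)) P = 0 :=
  polynomial_recurrence_of_simple_linear_recurrence_general c μ a ha r hr
end

section
/- Let K be a field, let {a_n}_{n≥1} be a sequence with values in K, and let ℓ ≥ 1. Then {a_n} satisfies a homogeneous linear recurrence of length at most ℓ — that is, there exist x_1, …, x_ℓ ∈ K, not all zero, such that x_1 a_n + x_2 a_{n+1} + ⋯ + x_ℓ a_{n+ℓ−1} = 0 for all n ≥ 1 — if and only if det A_{ℓ,n} = 0 for every n ≥ ℓ, where A_{ℓ,n} is the ℓ × ℓ Toeplitz matrix with (i,j) entry a_{n−i+j} (1 ≤ i, j ≤ ℓ). -/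
/-!
Let a polynomial `p` act on a sequence by substituting the backward shift, so that
`(p b) n = ∑ i, pᵢ b (n + i)`. The determinant at `n` vanishes iff some nonzero `p` of degree `< ℓ`
satisfies `p a = 0` on the window `[n - ℓ + 1, n]`. Among these window relations choose one, `v`,
of minimal degree `d`. If `u` is the relation of another window, then `u (v a) = v (u a)`, and
`d ≤ deg u` makes the right side vanish at a place where the left side is a single term
`uₖ (v a) (n + k)`. With `k = deg u` this extends the zeros of `v a` forwards to infinity; with `k`
the order of `u` at `0`, it extends them backwards to all but `ℓ - 1 - d` places.
Hence `X ^ (ℓ - 1 - d) * v` is a recurrence of length at most `ℓ`.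
-/

open Polynomial Set

section Shift

variable {R M : Type*} [CommRing R] [AddCommGroup M] [Module R M]

variable (R M) in
/-- The backward shift `b ↦ (n ↦ b (n + 1))` on sequences. Polynomials in this operator are the
linear recurrence operators with constant coefficients. -/
def seqShift : Module.End R (ℕ → M) := LinearMap.funLeft R M Nat.succ

lemma seqShift_pow_apply (k : ℕ) (b : ℕ → M) (n : ℕ) : (seqShift R M ^ k) b n = b (n + k) := by
  induction k generalizing n with
  | zero => rfl
  | succ k ih =>
    rw [pow_succ', Module.End.mul_apply]
    exact (ih (n + 1)).trans (congrArg b (by omega))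

lemma aeval_seqShift_apply_of_natDegree_lt {p : R[X]} {k : ℕ} (hp : p.natDegree < k)
    (b : ℕ → M) (n : ℕ) :
    aeval (seqShift R M) p b n = ∑ i ∈ Finset.range k, p.coeff i • b (n + i) := by
  simp only [aeval_eq_sum_range' hp, LinearMap.sum_apply, LinearMap.smul_apply, Finset.sum_apply,
    Pi.smul_apply, seqShift_pow_apply]

lemma aeval_seqShift_X_pow_mul_apply (k : ℕ) (p : R[X]) (b : ℕ → M) (n : ℕ) :
    aeval (seqShift R M) (X ^ k * p) b n = aeval (seqShift R M) p b (n + k) := by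
  rw [map_mul, aeval_X_pow, Module.End.mul_apply, seqShift_pow_apply]

lemma aeval_seqShift_apply_eq_zero {p : R[X]} {b : ℕ → M} {n : ℕ}
    (h : ∀ i ≤ p.natDegree, b (n + i) = 0) : aeval (seqShift R M) p b n = 0 := by
  rw [aeval_seqShift_apply_of_natDegree_lt p.natDegree.lt_succ_self]
  refine Finset.sum_eq_zero fun i hi => ?_
  rw [h i (Finset.mem_range_succ_iff.1 hi), smul_zero]

lemma aeval_seqShift_apply_eq_single {p : R[X]} {b : ℕ → M} {n : ℕ} (k : ℕ)
    (h : ∀ i ≠ k, p.coeff i ≠ 0 → b (n + i) = 0) :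
    aeval (seqShift R M) p b n = p.coeff k • b (n + k) := by
  rw [aeval_seqShift_apply_of_natDegree_lt p.natDegree.lt_succ_self]
  refine Finset.sum_eq_single k (fun i _ hik => ?_) (fun hk => ?_)
  · by_cases hi : p.coeff i = 0
    · rw [hi, zero_smul]
    · rw [h i hik hi, smul_zero]
  · rw [coeff_eq_zero_of_natDegree_lt (by simpa using hk), zero_smul]

lemma aeval_seqShift_apply_eq_zero_of_coeff_ne_zero [IsDomain R] [Module.IsTorsionFree R M]
    {u v : R[X]} {b : ℕ → M} {n k : ℕ} (hk : u.coeff k ≠ 0)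
    (hv : ∀ i ≠ k, u.coeff i ≠ 0 → aeval (seqShift R M) v b (n + i) = 0)
    (hu : ∀ i ≤ v.natDegree, aeval (seqShift R M) u b (n + i) = 0) :
    aeval (seqShift R M) v b (n + k) = 0 := by
  have comm : aeval (seqShift R M) u (aeval (seqShift R M) v b) =
      aeval (seqShift R M) v (aeval (seqShift R M) u b) := by
    simp only [← Module.End.mul_apply, ← map_mul, mul_comm]
  rw [← smul_eq_zero_iff_right hk, ← aeval_seqShift_apply_eq_single k hv, comm]
  exact aeval_seqShift_apply_eq_zero hu

end Shift

section Recurrence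

variable {R M : Type*} [CommRing R] [AddCommGroup M] [Module R M]

/-- The coefficients of `p` form a nontrivial linear recurrence of length at most `ℓ`, namely
`∑ i < ℓ, pᵢ • b (n + i) = 0`, which the sequence `b` satisfies at every `n ∈ S`. -/
structure IsRecurrenceOn (ℓ : ℕ) (b : ℕ → M) (S : Set ℕ) (p : R[X]) : Prop where
  ne_zero : p ≠ 0
  natDegree_lt : p.natDegree < ℓ
  eqOn_zero : EqOn (aeval (seqShift R M) p b) 0 S

lemma exists_isRecurrenceOn_iff {ℓ : ℕ} {b : ℕ → M} {S : Set ℕ} :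
    (∃ p : R[X], IsRecurrenceOn ℓ b S p) ↔
      ∃ x : Fin ℓ → R, x ≠ 0 ∧ ∀ n ∈ S, ∑ j, x j • b (n + j) = 0 := by
  classical
  constructor
  · rintro ⟨p, hp0, hpℓ, hp⟩
    refine ⟨toFn ℓ p, fun h => hp0 ?_, fun n hn => ?_⟩
    · rw [← ofFn_comp_toFn_eq_id_of_natDegree_lt hpℓ, h, map_zero]
    · have hpn := hp hn
      rwa [aeval_seqShift_apply_of_natDegree_lt hpℓ, Finset.sum_range] at hpn
  · rintro ⟨x, hx0, hx⟩
    have hp0 : ofFn ℓ x ≠ 0 := (map_ne_zero_iff _ (injective_ofFn ℓ)).2 hx0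
    have hpℓ : (ofFn ℓ x).natDegree < ℓ :=
      ofFn_natDegree_lt (Nat.one_le_iff_ne_zero.2 (ne_zero_of_ofFn_ne_zero hp0)) x
    refine ⟨ofFn ℓ x, hp0, hpℓ, fun n hn => ?_⟩
    rw [aeval_seqShift_apply_of_natDegree_lt hpℓ, Finset.sum_range]
    simpa only [ofFn_coeff_eq_val_of_lt x (Fin.is_lt _), Fin.eta, Pi.zero_apply] using hx n hn

namespace IsRecurrenceOn

variable {ℓ : ℕ} {b : ℕ → M} {S T : Set ℕ} {p : R[X]}

lemma mono (hp : IsRecurrenceOn ℓ b S p) (h : T ⊆ S) : IsRecurrenceOn ℓ b T p :=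
  ⟨hp.ne_zero, hp.natDegree_lt, hp.eqOn_zero.mono h⟩

lemma X_pow_mul {k : ℕ} (hp : IsRecurrenceOn ℓ b ((· + k) '' S) p)
    (hk : p.natDegree + k < ℓ) : IsRecurrenceOn ℓ b S (X ^ k * p) where
  ne_zero := (monic_X_pow k).mul_right_ne_zero hp.ne_zero
  natDegree_lt := by
    have : Nontrivial R := .of_polynomial_ne hp.ne_zero
    rwa [natDegree_X_pow_mul k hp.ne_zero]
  eqOn_zero n hn := by
    rw [aeval_seqShift_X_pow_mul_apply]
    exact hp.eqOn_zero (mem_image_of_mem _ hn)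

lemma of_X_pow_mul {k : ℕ} (hp : IsRecurrenceOn ℓ b S (X ^ k * p)) :
    IsRecurrenceOn ℓ b ((· + k) '' S) p where
  ne_zero := right_ne_zero_of_mul hp.ne_zero
  natDegree_lt := by
    have hdeg := hp.natDegree_lt
    have : Nontrivial R := .of_polynomial_ne hp.ne_zero
    rw [natDegree_X_pow_mul k (right_ne_zero_of_mul hp.ne_zero)] at hdeg
    omega
  eqOn_zero := by
    rintro _ ⟨n, hn, rfl⟩
    rw [← aeval_seqShift_X_pow_mul_apply]
    exact hp.eqOn_zero hn

variable {N m : ℕ} {u v : R[X]}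

lemma natDegree_add_natTrailingDegree_le
    (hmin : ∀ s ≥ N, ∀ u : R[X], IsRecurrenceOn ℓ b (Ico s (s + ℓ)) u →
      v.natDegree ≤ u.natDegree)
    (hm : N ≤ m) (hu : IsRecurrenceOn ℓ b (Ico m (m + ℓ)) u) :
    v.natDegree + u.natTrailingDegree ≤ u.natDegree := by
  obtain ⟨w, hw⟩ : X ^ u.natTrailingDegree ∣ u :=
    X_pow_dvd_iff.2 fun _ => coeff_eq_zero_of_lt_natTrailingDegree
  set k := u.natTrailingDegree
  have : Nontrivial R := .of_polynomial_ne hu.ne_zero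
  have hwk : IsRecurrenceOn ℓ b (Ico (m + k) (m + k + ℓ)) w := by
    rw [hw] at hu
    simpa only [image_add_const_Ico, add_right_comm] using hu.of_X_pow_mul
  rw [hw, natDegree_X_pow_mul k hwk.ne_zero]
  exact Nat.add_le_add_right (hmin _ (by omega) w hwk) k

variable [IsDomain R] [Module.IsTorsionFree R M]

lemma extend_forward (hex : ∀ s ≥ N, ∃ u : R[X], IsRecurrenceOn ℓ b (Ico s (s + ℓ)) u)
    (hmin : ∀ s ≥ N, ∀ u : R[X], IsRecurrenceOn ℓ b (Ico s (s + ℓ)) u →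
      v.natDegree ≤ u.natDegree)
    (hm : N ≤ m) (hv : IsRecurrenceOn ℓ b (Ico m (m + ℓ)) v) :
    IsRecurrenceOn ℓ b (Ici m) v := by
  refine ⟨hv.ne_zero, hv.natDegree_lt, fun t ht => ?_⟩
  induction t using Nat.strong_induction_on with
  | _ t ih =>
    by_cases htm : t < m + ℓ
    · exact hv.eqOn_zero ⟨ht, htm⟩
    obtain ⟨u, hu⟩ := hex (t + 1 - ℓ) (by omega)
    have hdeg : v.natDegree ≤ u.natDegree := hmin _ (by omega) u hu
    have huℓ := hu.natDegree_lt
    obtain ⟨n, rfl⟩ : ∃ n, t = n + u.natDegree := ⟨t - u.natDegree, by omega⟩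
    refine aeval_seqShift_apply_eq_zero_of_coeff_ne_zero (leadingCoeff_ne_zero.2 hu.ne_zero)
      (fun i hi hi0 => ?_) (fun i hi => hu.eqOn_zero ⟨by omega, by omega⟩)
    have hiu : i ≤ u.natDegree := le_natDegree_of_ne_zero hi0
    exact ih _ (by omega) (mem_Ici.2 (by omega))

lemma extend_backward (hex : ∀ s ≥ N, ∃ u : R[X], IsRecurrenceOn ℓ b (Ico s (s + ℓ)) u)
    (hmin : ∀ s ≥ N, ∀ u : R[X], IsRecurrenceOn ℓ b (Ico s (s + ℓ)) u →
      v.natDegree ≤ u.natDegree)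
    (hv : IsRecurrenceOn ℓ b (Ici m) v) :
    IsRecurrenceOn ℓ b (Ici (N + (ℓ - 1 - v.natDegree))) v := by
  have hvℓ := hv.natDegree_lt
  refine ⟨hv.ne_zero, hvℓ, fun t ht => ?_⟩
  rw [mem_Ici] at ht
  induction hj : m - t using Nat.strong_induction_on generalizing t with
  | _ j ih =>
    by_cases htm : m ≤ t
    · exact hv.eqOn_zero htm
    obtain ⟨u, hu⟩ := hex (t + v.natDegree + 1 - ℓ) (by omega)
    have hdeg := natDegree_add_natTrailingDegree_le hmin (by omega) hu
    have huℓ := hu.natDegree_lt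
    obtain ⟨n, rfl⟩ : ∃ n, t = n + u.natTrailingDegree := ⟨t - u.natTrailingDegree, by omega⟩
    refine aeval_seqShift_apply_eq_zero_of_coeff_ne_zero
      (trailingCoeff_eq_zero.not.2 hu.ne_zero)
      (fun i hi hi0 => ?_) (fun i hi => hu.eqOn_zero ⟨by omega, by omega⟩)
    have hiu : u.natTrailingDegree ≤ i := natTrailingDegree_le_of_ne_zero hi0
    exact ih _ (by omega) (n + i) (by omega) rfl

end IsRecurrenceOn

theorem exists_isRecurrenceOn_Ici_iff [IsDomain R] [Module.IsTorsionFree R M] {ℓ N : ℕ}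
    {b : ℕ → M} :
    (∃ p : R[X], IsRecurrenceOn ℓ b (Ici N) p) ↔
      ∀ m ≥ N, ∃ p : R[X], IsRecurrenceOn ℓ b (Ico m (m + ℓ)) p := by
  constructor
  · rintro ⟨p, hp⟩ m hm
    exact ⟨p, hp.mono fun n hn => hm.trans hn.1⟩
  · intro hex
    obtain ⟨v, ⟨m, hm, hv⟩, hmin⟩ := exists_minimalFor_of_wellFoundedLT
      (fun p : R[X] => ∃ m ≥ N, IsRecurrenceOn ℓ b (Ico m (m + ℓ)) p) natDegree
      ((hex N le_rfl).imp fun p hp => ⟨N, le_rfl, hp⟩)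
    have hmin' : ∀ s ≥ N, ∀ u : R[X], IsRecurrenceOn ℓ b (Ico s (s + ℓ)) u →
        v.natDegree ≤ u.natDegree :=
      fun s hs u hu => (le_total _ _).elim id (hmin ⟨s, hs, hu⟩)
    have hvN := (hv.extend_forward hex hmin' hm).extend_backward hex hmin'
    have hvℓ := hv.natDegree_lt
    refine ⟨X ^ (ℓ - 1 - v.natDegree) * v, IsRecurrenceOn.X_pow_mul ?_ (by omega)⟩
    rwa [image_add_const_Ici]

end Recurrence

section Toeplitz

variable {R : Type*} [CommRing R] [IsDomain R]

lemma det_toeplitz_eq_zero_iff {a : ℕ → R} {ℓ n : ℕ} (hn : ℓ ≤ n + 1) :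
    Matrix.det (Matrix.of fun i j : Fin ℓ => a (n - (i : ℕ) + (j : ℕ))) = 0 ↔
      ∃ p : R[X], IsRecurrenceOn ℓ a (Ico (n + 1 - ℓ) (n + 1)) p := by
  have mem_window : ∀ k, k ∈ Ico (n + 1 - ℓ) (n + 1) ↔ ∃ i : Fin ℓ, n - i = k := fun k =>
    ⟨fun ⟨hk, hk'⟩ => ⟨⟨n - k, by omega⟩, Nat.sub_sub_self (by omega)⟩,
      fun ⟨i, hi⟩ => ⟨by omega, by omega⟩⟩
  rw [← Matrix.exists_mulVec_eq_zero_iff, exists_isRecurrenceOn_iff]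
  simp only [mem_window, forall_exists_index, forall_apply_eq_imp_iff, funext_iff, Matrix.mulVec,
    dotProduct, Matrix.of_apply, Pi.zero_apply, smul_eq_mul, mul_comm, ne_eq]

theorem linear_recurrence_iff_toeplitz_det_eq_zero_general (a : ℕ → R) (ℓ : ℕ) :
    (∃ x : Fin ℓ → R, x ≠ 0 ∧ ∀ n : ℕ, 1 ≤ n → ∑ j, x j * a (n + j) = 0) ↔
      ∀ n : ℕ, ℓ ≤ n →
        Matrix.det (Matrix.of fun i j : Fin ℓ => a (n - (i : ℕ) + (j : ℕ))) = 0 := by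
  have recurrence_iff : (∃ p : R[X], IsRecurrenceOn ℓ a (Ici 1) p) ↔
      ∃ x : Fin ℓ → R, x ≠ 0 ∧ ∀ n : ℕ, 1 ≤ n → ∑ j, x j * a (n + j) = 0 :=
    exists_isRecurrenceOn_iff
  rw [← recurrence_iff, exists_isRecurrenceOn_Ici_iff]
  refine ⟨fun h n hn => ?_, fun h m hm => ?_⟩
  · rw [det_toeplitz_eq_zero_iff (by omega)]
    simpa only [show n + 1 - ℓ + ℓ = n + 1 by omega] using h (n + 1 - ℓ) (by omega)
  · obtain ⟨n, hn⟩ : ∃ n, m + ℓ = n + 1 := ⟨m + ℓ - 1, by omega⟩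
    have hdet := (det_toeplitz_eq_zero_iff (by omega)).1 (h n (by omega))
    rwa [← hn, Nat.add_sub_cancel] at hdet

end Toeplitz

/-- A sequence `{a n}` with values in a field satisfies a homogeneous linear recurrence of
length at most `ℓ` if and only if all the `ℓ × ℓ` Toeplitz determinants
`det (a (n - i + j))_{1 ≤ i,j ≤ ℓ}` vanish for `n ≥ ℓ`. -/
theorem linear_recurrence_iff_toeplitz_det_eq_zero
    {K : Type*} [Field K] (a : ℕ → K) (ℓ : ℕ) (hℓ : 1 ≤ ℓ) :
    (∃ x : Fin ℓ → K, x ≠ 0 ∧ ∀ n : ℕ, 1 ≤ n → ∑ j, x j * a (n + j) = 0) ↔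
      ∀ n : ℕ, ℓ ≤ n →
        Matrix.det (Matrix.of fun i j : Fin ℓ => a (n - (i : ℕ) + (j : ℕ))) = 0 :=
  linear_recurrence_iff_toeplitz_det_eq_zero_general a ℓ
end

section
/- Let K be a field, let ℓ ≥ 1, let μ_1, …, μ_ℓ and c_1, …, c_ℓ be nonzero elements of K, and set a_n = ∑_{i=1}^ℓ c_i μ_i^n. Then for every n ≥ ℓ, the determinant of the ℓ × ℓ Toeplitz matrix A_{ℓ,n} with (i,j) entry a_{n−i+j} has the factorization det A_{ℓ,n} = (−1)^{ℓ(ℓ−1)/2} · c_1 ⋯ c_ℓ · (μ_1 ⋯ μ_ℓ)^{n−ℓ+1} · ∏_{1 ≤ i < j ≤ ℓ} (μ_i − μ_j)^2. -/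
/-!
Since `n - i + j = (n - ℓ + 1) + (ℓ - 1 - i) + j` for zero-based indices, an exponential sum
`a n = ∑ c k * μ k ^ n` splits the Toeplitz matrix as `Wᵀ * D * V`, where `V` is the Vandermonde
matrix of `μ`, `W` is `V` with its columns in reverse order, and `D` is diagonal with entries
`c k * μ k ^ (n - ℓ + 1)`. The determinants of `W` and `V` are the products of the differences
`μ i - μ j` and `μ j - μ i` over `i < j`, which differ by one sign for each of the `ℓ (ℓ - 1) / 2`
pairs.
-/

section

open Finset Matrix

variable {R : Type*} [CommRing R] {ℓ : ℕ}

theorem sum_card_Ioi_fin (ℓ : ℕ) : ∑ i : Fin ℓ, #(Ioi i) = ℓ * (ℓ - 1) / 2 := by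
  simp only [Fin.card_Ioi]
  rw [Fin.sum_univ_eq_sum_range (fun i ↦ ℓ - 1 - i) ℓ, sum_range_reflect (fun i ↦ i) ℓ,
    sum_range_id]

theorem prod_prod_Ioi_neg (f : Fin ℓ → Fin ℓ → R) :
    ∏ i, ∏ j ∈ Ioi i, -f i j = (-1) ^ (ℓ * (ℓ - 1) / 2) * ∏ i, ∏ j ∈ Ioi i, f i j := by
  simp only [prod_neg, prod_mul_distrib, prod_pow_eq_pow_sum, sum_card_Ioi_fin]

theorem det_vandermonde_eq_neg_one_pow_mul (v : Fin ℓ → R) :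
    (vandermonde v).det = (-1) ^ (ℓ * (ℓ - 1) / 2) * ∏ i, ∏ j ∈ Ioi i, (v i - v j) := by
  simp only [det_vandermonde, ← prod_prod_Ioi_neg, neg_sub]

theorem transpose_projVandermonde_one_mul_diagonal_mul_vandermonde (v d : Fin ℓ → R) :
    (projVandermonde 1 v)ᵀ * diagonal d * vandermonde v =
      of fun i j : Fin ℓ ↦ ∑ k, d k * v k ^ ((i.rev : ℕ) + j) := by
  ext i j
  rw [mul_apply, of_apply]
  refine sum_congr rfl fun k _ ↦ ?_
  rw [mul_diagonal, transpose_apply, projVandermonde_apply, vandermonde_apply, Pi.one_apply,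
    pow_add]
  ring

theorem det_of_sum_mul_pow_rev_add (v d : Fin ℓ → R) :
    (of fun i j : Fin ℓ ↦ ∑ k, d k * v k ^ ((i.rev : ℕ) + j)).det =
      (-1) ^ (ℓ * (ℓ - 1) / 2) * (∏ i, d i) * ∏ i, ∏ j ∈ Ioi i, (v i - v j) ^ 2 := by
  rw [← transpose_projVandermonde_one_mul_diagonal_mul_vandermonde, det_mul, det_mul, det_transpose,
    det_diagonal, det_projVandermonde, det_vandermonde_eq_neg_one_pow_mul]
  simp only [Pi.one_apply, one_mul, prod_pow]
  ring

theorem toeplitz_det_factorization_general (μ c : Fin ℓ → R) (a : ℕ → R)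
    (ha : ∀ n, 1 ≤ n → a n = ∑ i, c i * μ i ^ n) {n : ℕ} (hn : ℓ ≤ n) :
    (of fun i j : Fin ℓ ↦ a (n - (i : ℕ) + (j : ℕ))).det =
      (-1) ^ (ℓ * (ℓ - 1) / 2) * (∏ i, c i) * (∏ i, μ i) ^ (n - ℓ + 1) *
        ∏ i, ∏ j ∈ Ioi i, (μ i - μ j) ^ 2 := by
  have entry (i j : Fin ℓ) : a (n - (i : ℕ) + (j : ℕ)) =
      ∑ k, c k * μ k ^ (n - ℓ + 1) * μ k ^ ((i.rev : ℕ) + j) := by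
    have exponent : n - (i : ℕ) + j = n - ℓ + 1 + ((i.rev : ℕ) + j) := by
      rw [Fin.val_rev]
      omega
    rw [exponent, ha _ (by omega)]
    simp only [pow_add, mul_assoc]
  simp only [entry]
  rw [det_of_sum_mul_pow_rev_add μ fun k ↦ c k * μ k ^ (n - ℓ + 1), prod_mul_distrib, prod_pow,
    ← mul_assoc]

end

/-- Toeplitz determinant factorization: if `a n = ∑ c i * μ i ^ n` with nonzero `c i`
and nonzero `μ i`, then for `n ≥ ℓ`,
`det (a (n - i + j))_{1 ≤ i,j ≤ ℓ}
  = (-1)^(ℓ(ℓ-1)/2) * (∏ c i) * (∏ μ i)^(n - ℓ + 1) * ∏_{i < j} (μ i - μ j)^2`. -/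
theorem toeplitz_det_factorization
    {K : Type*} [Field K] (ℓ : ℕ) (μ c : Fin ℓ → K)
    (hμ : ∀ i, μ i ≠ 0) (hc : ∀ i, c i ≠ 0)
    (a : ℕ → K) (ha : ∀ n : ℕ, 1 ≤ n → a n = ∑ i, c i * μ i ^ n) :
    ∀ n : ℕ, ℓ ≤ n →
      Matrix.det (Matrix.of fun i j : Fin ℓ => a (n - (i : ℕ) + (j : ℕ))) =
        (-1 : K) ^ (ℓ * (ℓ - 1) / 2) * (∏ i, c i) * (∏ i, μ i) ^ (n - ℓ + 1) *
          ∏ i, ∏ j ∈ Finset.Ioi i, (μ i - μ j) ^ 2 :=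
  fun _ hn ↦ toeplitz_det_factorization_general μ c a ha hn
end

section
/- Let K be a field of characteristic zero and let p ∈ K[x] be a monic polynomial of degree ℓ ≥ 1. Then the (ℓ+1) × (ℓ+1) Toeplitz determinant Δ(x) = det( p(x − i + j) )_{i,j=0}^{ℓ}, regarded as a polynomial in x, is the constant (ℓ!)^{ℓ+1}, independent of p. -/
open Polynomial

/-!
Expanding `p (v - u)` in powers of `-u` and `v` writes the matrix `(p (v j - u i))` as a
Vandermonde matrix times a matrix of coefficients times a Vandermonde matrix. When the powers of
`-u` are listed in decreasing order, the coefficient matrix is lower triangular, because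
`natDegree p ≤ n`, and its diagonal entries are `n.choose k * p.coeff n`. The determinant
therefore sees only the top coefficient of `p`. For the nodes `u i = i` and `v j = x + j` both
Vandermonde determinants are the superfactorial `1! ⋯ n!`, and `x` drops out.
-/

theorem prod_choose_mul_superFactorial_sq (n : ℕ) :
    (∏ k : Fin (n + 1), n.choose k) * n.superFactorial ^ 2 = n.factorial ^ (n + 1) := by
  have reflected : ∏ k ∈ Finset.range (n + 1), (n - k).factorial = n.superFactorial := by
    simpa only [Nat.add_sub_cancel, Nat.prod_range_succ_factorial] using
      Finset.prod_range_reflect Nat.factorial (n + 1)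
  calc (∏ k : Fin (n + 1), n.choose k) * n.superFactorial ^ 2
      = ∏ k ∈ Finset.range (n + 1), n.choose k * k.factorial * (n - k).factorial := by
        rw [Finset.prod_mul_distrib, Finset.prod_mul_distrib, reflected,
          Nat.prod_range_succ_factorial, Finset.prod_range, sq, mul_assoc]
    _ = ∏ _k ∈ Finset.range (n + 1), n.factorial :=
        Finset.prod_congr rfl fun k hk =>
          Nat.choose_mul_factorial_mul_factorial (Nat.lt_succ_iff.mp (Finset.mem_range.mp hk))
    _ = n.factorial ^ (n + 1) := by rw [Finset.prod_const, Finset.card_range]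

theorem eval_add_eq_sum_range {R : Type*} [CommSemiring R] {p : R[X]} {n : ℕ}
    (hn : p.natDegree < n) (x y : R) :
    p.eval (x + y) = ∑ m ∈ Finset.range n, ∑ k ∈ Finset.range n,
      x ^ m * ((k + m).choose k * p.coeff (k + m)) * y ^ k := by
  rw [← taylor_eval, eval_eq_sum_range' (by rwa [natDegree_taylor])]
  refine Finset.sum_congr rfl fun m _ => ?_
  have hasse_degree : (hasseDeriv m p).natDegree < n :=
    (natDegree_hasseDeriv_le p m).trans_lt ((Nat.sub_le _ _).trans_lt hn)
  rw [taylor_coeff, eval_eq_sum_range' hasse_degree, Finset.sum_mul]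
  refine Finset.sum_congr rfl fun k _ => ?_
  rw [hasseDeriv_coeff, ← Nat.choose_symm_add]
  ring

section CommRing

variable {R : Type*} [CommRing R]

/-- The coefficient matrix of the expansion of `p (x + y)` in powers of `x` and `y` up to `n`:
column `k` stands for `y ^ k`, while row `m` stands for `x ^ (n - m)`, an order that makes the
matrix triangular when `p.natDegree ≤ n`. -/
def evalAddCoeffMatrix (n : ℕ) (p : R[X]) : Matrix (Fin (n + 1)) (Fin (n + 1)) R :=
  Matrix.of fun m k => (k + m.rev : ℕ).choose k * p.coeff (k + m.rev)

theorem of_eval_sub_eq_mul {n : ℕ} {p : R[X]} (hp : p.natDegree ≤ n) (u v : Fin (n + 1) → R) :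
    Matrix.of (fun i j => p.eval (v j - u i)) =
      Matrix.projVandermonde 1 (-u) * evalAddCoeffMatrix n p *
        (Matrix.vandermonde v).transpose := by
  ext i j
  rw [Matrix.of_apply, sub_eq_neg_add, eval_add_eq_sum_range (Nat.lt_succ_of_le hp),
    Finset.sum_range, ← Equiv.sum_comp Fin.revPerm, Matrix.mul_assoc, Matrix.mul_apply]
  refine Finset.sum_congr rfl fun m _ => ?_
  rw [Finset.sum_range, Matrix.mul_apply, Finset.mul_sum]
  refine Finset.sum_congr rfl fun k _ => ?_
  simp only [evalAddCoeffMatrix, Matrix.projVandermonde_apply, Matrix.of_apply,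
    Matrix.transpose_apply, Matrix.vandermonde_apply, Fin.revPerm_apply, Pi.one_apply,
    Pi.neg_apply, one_pow, one_mul, mul_assoc]

theorem isLowerTriangular_evalAddCoeffMatrix {n : ℕ} {p : R[X]} (hp : p.natDegree ≤ n) :
    (evalAddCoeffMatrix n p).IsLowerTriangular := by
  intro m k (hmk : m < k)
  have degree_lt : p.natDegree < k + m.rev := by
    rw [Fin.val_rev]
    omega
  rw [evalAddCoeffMatrix, Matrix.of_apply, coeff_eq_zero_of_natDegree_lt degree_lt, mul_zero]

theorem evalAddCoeffMatrix_diag (n : ℕ) (p : R[X]) (k : Fin (n + 1)) :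
    evalAddCoeffMatrix n p k k = n.choose k * p.coeff n := by
  have index_sum : (k + k.rev : ℕ) = n := by
    rw [Fin.val_rev]
    omega
  rw [evalAddCoeffMatrix, Matrix.of_apply, index_sum]

theorem det_evalAddCoeffMatrix {n : ℕ} {p : R[X]} (hp : p.natDegree ≤ n) :
    (evalAddCoeffMatrix n p).det = (∏ k : Fin (n + 1), (n.choose k : R)) * p.coeff n ^ (n + 1) := by
  rw [Matrix.det_of_isLowerTriangular _ (isLowerTriangular_evalAddCoeffMatrix hp)]
  simp only [evalAddCoeffMatrix_diag, Finset.prod_mul_distrib, Finset.prod_const,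
    Finset.card_univ, Fintype.card_fin]

theorem det_projVandermonde_one_neg {n : ℕ} (u : Fin n → R) :
    (Matrix.projVandermonde 1 (-u)).det = (Matrix.vandermonde u).det := by
  simp only [Matrix.det_projVandermonde, Matrix.det_vandermonde, Pi.one_apply, Pi.neg_apply,
    one_mul, sub_neg_eq_add, neg_add_eq_sub]

theorem det_of_eval_sub {n : ℕ} {p : R[X]} (hp : p.natDegree ≤ n) (u v : Fin (n + 1) → R) :
    (Matrix.of fun i j => p.eval (v j - u i)).det =
      (∏ k : Fin (n + 1), (n.choose k : R)) * p.coeff n ^ (n + 1) *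
        (Matrix.vandermonde u).det * (Matrix.vandermonde v).det := by
  rw [of_eval_sub_eq_mul hp, Matrix.det_mul, Matrix.det_mul, Matrix.det_transpose,
    det_projVandermonde_one_neg, det_evalAddCoeffMatrix hp]
  ring

theorem det_of_eval_add_natCast_sub_natCast {n : ℕ} {p : R[X]} (hp : p.natDegree ≤ n) (x : R) :
    (Matrix.of fun i j : Fin (n + 1) => p.eval (x + (j : ℕ) - (i : ℕ))).det =
      (n.factorial * p.coeff n) ^ (n + 1) := by
  have det_nodes : (Matrix.vandermonde fun i : Fin (n + 1) => ((i : ℕ) : R)).det =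
      n.superFactorial := Matrix.det_vandermonde_id_eq_superFactorial n
  have det_shifted_nodes : (Matrix.vandermonde fun j : Fin (n + 1) => x + (j : ℕ)).det =
      n.superFactorial := by
    simp only [add_comm x, Matrix.det_vandermonde_add, det_nodes]
  have prod_choose : (∏ k : Fin (n + 1), (n.choose k : R)) * n.superFactorial ^ 2 =
      n.factorial ^ (n + 1) :=
    mod_cast congrArg (Nat.cast (R := R)) (prod_choose_mul_superFactorial_sq n)
  rw [det_of_eval_sub hp (fun i => ((i : ℕ) : R)) (fun j => x + (j : ℕ)), det_nodes,
    det_shifted_nodes, mul_pow, ← prod_choose]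
  ring

theorem toeplitz_det_of_monic_is_factorial_power_general {n : ℕ} {p : R[X]}
    (hp : p.natDegree ≤ n) :
    Matrix.det (Matrix.of fun i j : Fin (n + 1) =>
        p.comp (X + C ((j : ℕ) : R) - C ((i : ℕ) : R))) =
      C ((n.factorial * p.coeff n) ^ (n + 1)) := by
  have degree_map_le : (p.map C).natDegree ≤ n := natDegree_map_le.trans hp
  simpa only [comp, eval_map, coeff_map, map_natCast, map_mul, map_pow] using
    det_of_eval_add_natCast_sub_natCast degree_map_le X

end CommRing

/-- For a monic polynomial `p` of degree `ℓ ≥ 1` over a field of characteristic zero, the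
`(ℓ+1) × (ℓ+1)` Toeplitz determinant `det (p(x - i + j))_{0 ≤ i,j ≤ ℓ}`, as a polynomial
in `x`, equals the constant `(ℓ!)^(ℓ+1)`, independent of `p`. -/
theorem toeplitz_det_of_monic_is_factorial_power
    {K : Type*} [Field K] [CharZero K]
    (ℓ : ℕ) (hℓ : 1 ≤ ℓ) (p : Polynomial K) (hp : p.Monic) (hdeg : p.natDegree = ℓ) :
    Matrix.det (Matrix.of fun i j : Fin (ℓ + 1) =>
        p.comp (X + C ((j : ℕ) : K) - C ((i : ℕ) : K))) =
      C ((ℓ.factorial : K) ^ (ℓ + 1)) := by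
  subst hdeg
  simpa only [hp.coeff_natDegree, mul_one] using
    toeplitz_det_of_monic_is_factorial_power_general (p := p) le_rfl
end

section
/- Let K be a field, let λ_1, …, λ_d be nonzero elements of K, set r_m = ∏_{i=1}^d (λ_i^m − 1), and for n ≥ 2^d let R_n be the 2^d × 2^d Toeplitz matrix with (i,j) entry r_{n−i+j}. Then for every n ≥ 2^d + 1, det R_n · (det R_{2^d})^{n − 2^d − 1} = (det R_{2^d + 1})^{n − 2^d}; that is, the determinants det R_n satisfy det R_n = (det R_{2^d+1})^{n−2^d} / (det R_{2^d})^{n−2^d−1} whenever det R_{2^d} is nonzero. -/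
/-!
Expanding `∏ i, (l i ^ m - 1)` over subsets writes the `m`-th cyclic resultant as a signed sum of
`m`-th powers of the `2 ^ d` subset products of the `l i`. For any combination of `N` geometric
progressions, the `N × N` Toeplitz matrices factor through two Vandermonde matrices and a diagonal
matrix, and only the diagonal depends on the shift: each unit shift multiplies the determinant by
the product of the `N` ratios. Hence the determinants form a geometric progression.
-/

open Finset Matrix

/-- The `N × N` Toeplitz matrix of the sequence `a` with `a n` on the diagonal. It is meant for
`N ≤ n + 1`, where the subtraction `n - i` is not truncated. -/
def toeplitz {A : Type*} (a : ℕ → A) (N n : ℕ) : Matrix (Fin N) (Fin N) A :=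
  .of fun i j => a (n - i + j)

section ExponentialSums

variable {A : Type*} [CommRing A] {a : ℕ → A} {N : ℕ}

theorem toeplitz_eq_projVandermonde_mul_diagonal_mul_vandermonde {c μ : Fin N → A}
    (ha : ∀ m, 1 ≤ m → a m = ∑ s, c s * μ s ^ m) (k : ℕ) :
    toeplitz a N (N + k) =
      (projVandermonde 1 μ)ᵀ * diagonal (fun s => c s * μ s ^ (k + 1)) * vandermonde μ := by
  ext i j
  have index_eq : N + k - i + j = i.rev + (k + 1) + j := by
    rw [Fin.val_rev]
    lia
  have index_pos : 1 ≤ N + k - i + j := by lia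
  rw [toeplitz, of_apply, ha _ index_pos, index_eq, mul_apply]
  refine sum_congr rfl fun s _ => ?_
  rw [mul_diagonal, transpose_apply, projVandermonde_apply, vandermonde_apply, Pi.one_apply]
  ring

theorem det_toeplitz_add {σ : Type*} [Fintype σ] {c μ : σ → A} (hσ : Fintype.card σ = N)
    (ha : ∀ m, 1 ≤ m → a m = ∑ s, c s * μ s ^ m) (k : ℕ) :
    (toeplitz a N (N + k)).det = (toeplitz a N N).det * (∏ s, μ s) ^ k := by
  let e : Fin N ≃ σ := (Fintype.equivFinOfCardEq hσ).symm
  have expansion (m : ℕ) (hm : 1 ≤ m) : a m = ∑ s, (c ∘ e) s * (μ ∘ e) s ^ m :=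
    (ha m hm).trans (e.sum_comp fun s => c s * μ s ^ m).symm
  have det_eq (k : ℕ) : (toeplitz a N (N + k)).det =
      (projVandermonde 1 (μ ∘ e)).det * ((∏ s, c s) * (∏ s, μ s) ^ (k + 1)) *
        (vandermonde (μ ∘ e)).det := by
    rw [toeplitz_eq_projVandermonde_mul_diagonal_mul_vandermonde expansion, det_mul, det_mul,
      det_transpose, det_diagonal, prod_mul_distrib, prod_pow]
    simp only [Function.comp_apply, e.prod_comp]
  have det_eq_zero_shift := det_eq 0
  rw [Nat.add_zero] at det_eq_zero_shift
  rw [det_eq, det_eq_zero_shift]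
  ring

theorem det_toeplitz_mul_det_pow {σ : Type*} [Fintype σ] {c μ : σ → A} (hσ : Fintype.card σ = N)
    (ha : ∀ m, 1 ≤ m → a m = ∑ s, c s * μ s ^ m) (k : ℕ) :
    (toeplitz a N (N + (k + 1))).det * (toeplitz a N N).det ^ k =
      (toeplitz a N (N + 1)).det ^ (k + 1) := by
  rw [det_toeplitz_add hσ ha (k + 1), det_toeplitz_add hσ ha 1]
  ring

end ExponentialSums

theorem prod_pow_sub_one_eq_sum {A ι : Type*} [CommRing A] [DecidableEq ι] (s : Finset ι)
    (l : ι → A) (m : ℕ) :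
    ∏ i ∈ s, (l i ^ m - 1) = ∑ t ∈ s.powerset, (-1) ^ #(s \ t) * (∏ i ∈ t, l i) ^ m := by
  simp only [sub_eq_add_neg, prod_add, prod_const, prod_pow, mul_comm]

theorem cyclic_resultant_toeplitz_det_recursion_general
    {A : Type*} [CommRing A] (d : ℕ) (l : Fin d → A)
    (r : ℕ → A) (hr : ∀ m : ℕ, 1 ≤ m → r m = ∏ i, (l i ^ m - 1))
    (R : ℕ → Matrix (Fin (2 ^ d)) (Fin (2 ^ d)) A)
    (hR : ∀ n : ℕ, 2 ^ d ≤ n →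
      R n = Matrix.of fun i j : Fin (2 ^ d) => r (n - (i : ℕ) + (j : ℕ)))
    (n : ℕ) (hn : 2 ^ d + 1 ≤ n) :
    (R n).det * (R (2 ^ d)).det ^ (n - 2 ^ d - 1) = (R (2 ^ d + 1)).det ^ (n - 2 ^ d) := by
  have R_eq (m : ℕ) (hm : 2 ^ d ≤ m) : R m = toeplitz r (2 ^ d) m := hR m hm
  have card_subsets : Fintype.card (Finset (Fin d)) = 2 ^ d := by
    rw [Fintype.card_finset, Fintype.card_fin]
  have expansion (m : ℕ) (hm : 1 ≤ m) :
      r m = ∑ t : Finset (Fin d), (-1) ^ #(univ \ t) * (∏ i ∈ t, l i) ^ m := by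
    rw [hr m hm, prod_pow_sub_one_eq_sum, powerset_univ]
  obtain ⟨k, rfl⟩ : ∃ k, n = 2 ^ d + (k + 1) := ⟨n - 2 ^ d - 1, by lia⟩
  rw [R_eq _ (by lia), R_eq _ le_rfl, R_eq _ (by lia), Nat.add_sub_cancel_left,
    Nat.add_sub_cancel]
  exact det_toeplitz_mul_det_pow card_subsets expansion k

/-- For the `2^d × 2^d` Toeplitz matrices `R_n = (r (n - i + j))` built from the cyclic
resultants `r m = ∏ (l i ^ m - 1)` of nonzero `l 1, …, l d`, one has for `n ≥ 2^d + 1`: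
`det R_n * (det R_{2^d})^(n - 2^d - 1) = (det R_{2^d + 1})^(n - 2^d)`; in particular,
if `det R_{2^d} ≠ 0` then `det R_n = (det R_{2^d+1})^(n-2^d) / (det R_{2^d})^(n-2^d-1)`. -/
theorem cyclic_resultant_toeplitz_det_recursion
    {K : Type*} [Field K] (d : ℕ) (l : Fin d → K) (hl : ∀ i, l i ≠ 0)
    (r : ℕ → K) (hr : ∀ m : ℕ, 1 ≤ m → r m = ∏ i, (l i ^ m - 1))
    (R : ℕ → Matrix (Fin (2 ^ d)) (Fin (2 ^ d)) K)
    (hR : ∀ n : ℕ, 2 ^ d ≤ n →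
      R n = Matrix.of fun i j : Fin (2 ^ d) => r (n - (i : ℕ) + (j : ℕ))) :
    ∀ n : ℕ, 2 ^ d + 1 ≤ n →
      (R n).det * (R (2 ^ d)).det ^ (n - 2 ^ d - 1) = (R (2 ^ d + 1)).det ^ (n - 2 ^ d) ∧
      ((R (2 ^ d)).det ≠ 0 →
        (R n).det = (R (2 ^ d + 1)).det ^ (n - 2 ^ d) / (R (2 ^ d)).det ^ (n - 2 ^ d - 1)) := by
  intro n hn
  have key := cyclic_resultant_toeplitz_det_recursion_general d l r hr R hR n hn
  exact ⟨key, fun h => (eq_div_iff (pow_ne_zero _ h)).2 key⟩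
end

section
/- Let K be a field, let λ_1, λ_2 ∈ K, and consider the monic quadratic f(x) = x² + ax + b with a = −(λ_1 + λ_2) and b = λ_1 λ_2, with cyclic resultants r_m = (λ_1^m − 1)(λ_2^m − 1). Then for all n ≥ 1 the following length-3 polynomial recurrence holds: (a+b+1)·[(a−2)r_{n+2} + a(a−b−1)r_{n+1} + (a−2b)b·r_n − (a−b−1)(a+b+1)] = −r_{n+2}² − (a−2b)r_{n+1}r_{n+2} + ab·r_n r_{n+2} + (a−b−1)b·r_{n+1}² − (a−2)b²·r_n r_{n+1} − b³·r_n². -/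
/-!
Write `f(x) = x² + a x + b` and let `sₙ = l₁ⁿ + l₂ⁿ` be the power sums of its roots, so that
`rₙ = bⁿ + 1 - sₙ`. The operator `E² + a E + b`, with `E` the shift `n ↦ n + 1`, annihilates `sₙ`
and sends `bⁿ + 1` to `f(1) (bⁿ⁺¹ + 1)`, hence `rₙ₊₂ + a rₙ₊₁ + b rₙ = f(1) (1 + bⁿ⁺¹)`. Moreover
the quadratic form `sₙ₊₁² + a sₙ sₙ₊₁ + b sₙ²` is multiplied by `b` at each step, so it equals
`(4 b - a²) bⁿ`.
Substitute `sₙ = bⁿ + 1 - rₙ` and `sₙ₊₁ = bⁿ⁺¹ + 1 - rₙ₊₁` in the second relation and multiply it by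
`b f(1)`: then `bⁿ` occurs only through `f(1) bⁿ⁺¹`, which the first relation expresses through `r`,
and no division is needed.
-/

section CommRing

variable {R : Type*} [CommRing R]

theorem quadraticForm_of_linear_recurrence {p q : R} {u : ℕ → R}
    (hu : ∀ n, u (n + 2) = p * u (n + 1) - q * u n) (n : ℕ) :
    u (n + 1) ^ 2 - p * u n * u (n + 1) + q * u n ^ 2 =
      q ^ n * (u 1 ^ 2 - p * u 0 * u 1 + q * u 0 ^ 2) := by
  induction n with
  | zero => ring
  | succ n ih =>
    calc
      u (n + 2) ^ 2 - p * u (n + 1) * u (n + 2) + q * u (n + 1) ^ 2 =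
          q * (u (n + 1) ^ 2 - p * u n * u (n + 1) + q * u n ^ 2) := by rw [hu]; ring
      _ = q ^ (n + 1) * (u 1 ^ 2 - p * u 0 * u 1 + q * u 0 ^ 2) := by rw [ih]; ring

theorem pow_add_pow_add_two (x y : R) (n : ℕ) :
    x ^ (n + 2) + y ^ (n + 2) =
      (x + y) * (x ^ (n + 1) + y ^ (n + 1)) - x * y * (x ^ n + y ^ n) := by
  ring

theorem quadraticForm_pow_add_pow (x y : R) (n : ℕ) :
    (x ^ (n + 1) + y ^ (n + 1)) ^ 2 - (x + y) * (x ^ n + y ^ n) * (x ^ (n + 1) + y ^ (n + 1))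
        + x * y * (x ^ n + y ^ n) ^ 2 =
      (4 * (x * y) - (x + y) ^ 2) * (x * y) ^ n := by
  rw [quadraticForm_of_linear_recurrence (u := fun m ↦ x ^ m + y ^ m) (pow_add_pow_add_two x y) n]
  ring

theorem pow_sub_one_mul_pow_sub_one (x y : R) (m : ℕ) :
    (x ^ m - 1) * (y ^ m - 1) = (x * y) ^ m + 1 - (x ^ m + y ^ m) := by
  ring

theorem pow_sub_one_mul_pow_sub_one_linear_recurrence (x y : R) (n : ℕ) :
    (x ^ (n + 2) - 1) * (y ^ (n + 2) - 1) - (x + y) * ((x ^ (n + 1) - 1) * (y ^ (n + 1) - 1))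
        + x * y * ((x ^ n - 1) * (y ^ n - 1)) =
      (1 - (x + y) + x * y) * (1 + (x * y) ^ (n + 1)) := by
  simp only [pow_sub_one_mul_pow_sub_one]
  linear_combination -pow_add_pow_add_two x y n

theorem quadratic_relation_of_linear_of_quadratic {a b p r₀ r₁ r₂ : R}
    (linear : r₂ + a * r₁ + b * r₀ = (a + b + 1) * (1 + b * p))
    (quadratic : (b * p + 1 - r₁) ^ 2 + a * (p + 1 - r₀) * (b * p + 1 - r₁)
      + b * (p + 1 - r₀) ^ 2 = (4 * b - a ^ 2) * p) :
    (a + b + 1) * ((a - 2) * r₂ + a * (a - b - 1) * r₁ + (a - 2 * b) * b * r₀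
        - (a - b - 1) * (a + b + 1)) =
      -r₂ ^ 2 - (a - 2 * b) * r₁ * r₂ + a * b * r₀ * r₂ + (a - b - 1) * b * r₁ ^ 2
        - (a - 2) * b ^ 2 * r₀ * r₁ - b ^ 3 * r₀ ^ 2 := by
  have elimination : (a + b + 1) * b * p = r₂ + a * r₁ + b * r₀ - (a + b + 1) := by
    linear_combination -linear
  have scaled_quadratic : ((a + b + 1) * b * p) ^ 2
      + (2 * b * (1 - r₁) + a * (b * (1 - r₀) + (1 - r₁)) + 2 * b * (1 - r₀) - (4 * b - a ^ 2))
        * ((a + b + 1) * b * p)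
      + b * (a + b + 1) * ((1 - r₁) ^ 2 + a * (1 - r₀) * (1 - r₁) + b * (1 - r₀) ^ 2) = 0 := by
    linear_combination b * (a + b + 1) * quadratic
  rw [elimination] at scaled_quadratic
  linear_combination scaled_quadratic

theorem quadratic_cyclic_resultant_recurrence_general
    (l₁ l₂ a b : R) (ha : a = -(l₁ + l₂)) (hb : b = l₁ * l₂)
    (r : ℕ → R) (hr : ∀ m : ℕ, 1 ≤ m → r m = (l₁ ^ m - 1) * (l₂ ^ m - 1)) :
    ∀ n : ℕ, 1 ≤ n →
      (a + b + 1) * ((a - 2) * r (n + 2) + a * (a - b - 1) * r (n + 1)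
          + (a - 2 * b) * b * r n - (a - b - 1) * (a + b + 1)) =
        -(r (n + 2)) ^ 2 - (a - 2 * b) * r (n + 1) * r (n + 2)
          + a * b * r n * r (n + 2) + (a - b - 1) * b * (r (n + 1)) ^ 2
          - (a - 2) * b ^ 2 * r n * r (n + 1) - b ^ 3 * (r n) ^ 2 := by
  intro n hn
  have powerSum_eq (m : ℕ) (hm : 1 ≤ m) : b ^ m + 1 - r m = l₁ ^ m + l₂ ^ m := by
    rw [hr m hm, hb, pow_sub_one_mul_pow_sub_one, sub_sub_cancel]
  apply quadratic_relation_of_linear_of_quadratic (p := b ^ n)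
  · rw [hr (n + 2) (by omega), hr (n + 1) (by omega), hr n hn, ← pow_succ', ha, hb]
    linear_combination pow_sub_one_mul_pow_sub_one_linear_recurrence l₁ l₂ n
  · rw [← pow_succ', powerSum_eq (n + 1) (by omega), powerSum_eq n hn, ha, hb]
    linear_combination quadraticForm_pow_add_pow l₁ l₂ n

end CommRing

/-- The cyclic resultants `r m = (l₁^m - 1)(l₂^m - 1)` of a monic quadratic
`f(x) = x² + a x + b`, where `a = -(l₁ + l₂)` and `b = l₁ l₂`, satisfy the length-3
polynomial recurrence
`(a+b+1)[(a-2) r_{n+2} + a(a-b-1) r_{n+1} + (a-2b) b r_n - (a-b-1)(a+b+1)]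
  = -r_{n+2}² - (a-2b) r_{n+1} r_{n+2} + a b r_n r_{n+2} + (a-b-1) b r_{n+1}²
    - (a-2) b² r_n r_{n+1} - b³ r_n²`. -/
theorem quadratic_cyclic_resultant_recurrence
    {K : Type*} [Field K] (l₁ l₂ a b : K)
    (ha : a = -(l₁ + l₂)) (hb : b = l₁ * l₂)
    (r : ℕ → K) (hr : ∀ m : ℕ, 1 ≤ m → r m = (l₁ ^ m - 1) * (l₂ ^ m - 1)) :
    ∀ n : ℕ, 1 ≤ n →
      (a + b + 1) * ((a - 2) * r (n + 2) + a * (a - b - 1) * r (n + 1)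
          + (a - 2 * b) * b * r n - (a - b - 1) * (a + b + 1)) =
        -(r (n + 2)) ^ 2 - (a - 2 * b) * r (n + 1) * r (n + 2)
          + a * b * r n * r (n + 2) + (a - b - 1) * b * (r (n + 1)) ^ 2
          - (a - 2) * b ^ 2 * r n * r (n + 1) - b ^ 3 * (r n) ^ 2 :=
  quadratic_cyclic_resultant_recurrence_general l₁ l₂ a b ha hb r hr
end
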